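/- Fix A ∈ ℝ and an even integer p ≥ 2. There exist γ₀ > 0 and a constant C(p) > 0 such that for all γ = N^{−1/2} ≤ γ₀, the Gibbs expectation of the discrete L^p norm of the fluctuation field satisfies E^γ_{β,0}[ Σ_{x∈Λ_ε} ε² |X_γ(x)|^p ] ≤ C(p) γ^{−p/2}, where β = 1 + γ²(𝔠_γ + A). -/

import Mathlib

open scoped BigOperators ENNReal
open MeasureTheory

noncomputable section

namespace IsingKac

/-- The periodic lattice `Λ_N = {1-N, …, N}²`, realised as `(ℤ/2Nℤ)²`. -/
abbrev Lat (N : ℕ) : Type := ZMod (2*N) × ZMod (2*N)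

instance latNeZero (N : ℕ) [NeZero N] : NeZero (2*N) := ⟨by have := NeZero.ne N; omega⟩

/-- The representative of `v ∈ ℤ/2Nℤ` lying in `{1-N, …, N}`. -/
def latRep (N : ℕ) (v : ZMod (2*N)) : ℤ :=
  if (v.val : ℤ) ≤ (N : ℤ) then (v.val : ℤ) else (v.val : ℤ) - 2*N

def latRep2 (N : ℕ) (z : Lat N) : ℤ × ℤ := (latRep N z.1, latRep N z.2)

/-- The character `e_w(x) = exp(iπ w·x)`. -/
def eW (w : ℤ × ℤ) (x : ℝ × ℝ) : ℂ :=
  Complex.exp ((Real.pi : ℂ) * Complex.I * ((w.1 : ℂ) * (x.1 : ℂ) + (w.2 : ℂ) * (x.2 : ℂ)))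

/-- The point `ε z ∈ Λ_ε ⊂ 𝕋²` corresponding to `z ∈ Λ_N` (with `ε = 1/N`). -/
def latPt (N : ℕ) (z : Lat N) : ℝ × ℝ :=
  ((latRep N z.1 : ℝ) / N, (latRep N z.2 : ℝ) / N)

/-- Discrete Fourier coefficient `f̂(w) = Σ_{x ∈ Λ_ε} ε² f(x) e^{-iπ w·x}`. -/
def dFT (N : ℕ) [NeZero N] (f : Lat N → ℂ) (w : ℤ × ℤ) : ℂ :=
  ∑ z : Lat N, ((N : ℂ)^2)⁻¹ * f z * (starRingEnd ℂ) (eW w (latPt N z))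

/-- The extension operator `(Ex f)(x) = (1/4) Σ_{w ∈ Λ_N} f̂(w) e^{iπ w·x}` for `x ∈ 𝕋²`. -/
def Ex (N : ℕ) [NeZero N] (f : Lat N → ℂ) (x : ℝ × ℝ) : ℂ :=
  (1/4 : ℂ) * ∑ z : Lat N, dFT N f (latRep2 N z) * eW (latRep2 N z) x

/-- Discrete `L^p` norm on `Λ_ε`, `p ∈ [1,∞]`. -/
def dLp (N : ℕ) [NeZero N] (p : ℝ≥0∞) {E : Type*} [NormedAddCommGroup E]
    (f : Lat N → E) : ℝ :=
  if p = ∞ then ⨆ z : Lat N, ‖f z‖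
  else (∑ z : Lat N, ((N : ℝ)^2)⁻¹ * ‖f z‖ ^ p.toReal) ^ (1/p.toReal)

/-- Fundamental domain of the torus `𝕋² = [-1,1]²`. -/
def box : Set (ℝ × ℝ) := Set.Icc (-1 : ℝ) 1 ×ˢ Set.Icc (-1 : ℝ) 1

/-- `L^p(𝕋²)` norm, `p ∈ [1,∞]`. -/
def cLp (p : ℝ≥0∞) {E : Type*} [NormedAddCommGroup E] (g : ℝ × ℝ → E) : ℝ≥0∞ :=
  eLpNorm g p (volume.restrict box)

/-- Euclidean norm on `ℝ²`. -/
def enorm2 (r : ℝ × ℝ) : ℝ := Real.sqrt (r.1^2 + r.2^2)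

/-- A Littlewood–Paley partition of unity `(χ̃, χ)` on `ℝ²`. -/
structure LPpartition : Type where
  chit : ℝ × ℝ → ℝ
  chi : ℝ × ℝ → ℝ
  cont_t : Continuous chit
  cont : Continuous chi
  mem_t : ∀ r, chit r ∈ Set.Icc (0:ℝ) 1
  mem : ∀ r, chi r ∈ Set.Icc (0:ℝ) 1
  supp_t : ∀ r : ℝ × ℝ, 4/3 < enorm2 r → chit r = 0
  supp : ∀ r : ℝ × ℝ, enorm2 r < 3/4 ∨ 8/3 < enorm2 r → chi r = 0
  partition : ∀ r : ℝ × ℝ, chit r + ∑' k : ℕ, chi ((2:ℝ)^(-(k:ℤ)) • r) = 1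

/-- `χ_k`, for `k ≥ -1`. -/
def LPchi (P : LPpartition) (k : ℤ) : ℝ × ℝ → ℝ :=
  if k = -1 then P.chit else fun r => P.chi ((2:ℝ)^(-k) • r)

/-- The Littlewood–Paley block `δ_k (Ex f)` of (the extension of) a lattice function. -/
def dBlock (N : ℕ) [NeZero N] (P : LPpartition) (k : ℤ) (f : Lat N → ℂ) (x : ℝ × ℝ) : ℂ :=
  (1/4 : ℂ) * ∑ z : Lat N,
    ((LPchi P k ((latRep N z.1 : ℝ), (latRep N z.2 : ℝ)) : ℝ) : ℂ) *
      dFT N f (latRep2 N z) * eW (latRep2 N z) x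

/-- Discrete Besov norm `‖f‖_{B^ν_{p,q}(Λ_ε)}`. -/
def dBesov (N : ℕ) [NeZero N] (P : LPpartition) (ν : ℝ) (p q : ℝ≥0∞) (f : Lat N → ℂ) : ℝ :=
  if q = ∞ then
    ⨆ k : ℕ, (2:ℝ)^(ν * ((k:ℝ) - 1)) * dLp N p (fun z => dBlock N P ((k:ℤ)-1) f (latPt N z))
  else
    (∑' k : ℕ, ((2:ℝ)^(ν * ((k:ℝ) - 1)) *
      dLp N p (fun z => dBlock N P ((k:ℤ)-1) f (latPt N z))) ^ q.toReal) ^ (1/q.toReal)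

/-- The `C^{-ν}` (Besov–Hölder) norm of the extension `Ex f`:
`sup_{k ≥ -1} 2^{-νk} ‖δ_k (Ex f)‖_{L^∞(𝕋²)}`. -/
def holderNeg (N : ℕ) [NeZero N] (P : LPpartition) (ν : ℝ) (f : Lat N → ℂ) : ℝ :=
  ⨆ k : ℕ, (2:ℝ)^(-ν * ((k:ℝ) - 1)) * ⨆ x : ℝ × ℝ, ‖dBlock N P ((k:ℤ)-1) f x‖

/-- Spin values. -/
def spin (s : Bool) : ℝ := if s then 1 else -1

/-- Hamiltonian `H(σ) = (β/2) Σ_{x,y} k(x-y) σ_x σ_y + b Σ_x σ_x`. -/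
def hamil (N : ℕ) [NeZero N] (kk : Lat N → ℝ) (β b : ℝ) (σ : Lat N → ℝ) : ℝ :=
  β/2 * ∑ x : Lat N, ∑ y : Lat N, kk (x - y) * σ x * σ y + b * ∑ x : Lat N, σ x

/-- Gibbs expectation `E^γ_{β,b}[F]`. -/
def gibbsE (N : ℕ) [NeZero N] (kk : Lat N → ℝ) (β b : ℝ) (F : (Lat N → ℝ) → ℝ) : ℝ :=
  (∑ s : Lat N → Bool, Real.exp (hamil N kk β b (fun x => spin (s x))) * F (fun x => spin (s x))) /
  (∑ s : Lat N → Bool, Real.exp (hamil N kk β b (fun x => spin (s x))))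

/-- The profile `𝔎 : ℝ² → [0,1]`, twice differentiable, radial, supported in `B(0,3)`,
not identically zero. -/
structure KacProfile : Type where
  f : ℝ × ℝ → ℝ
  smooth : ContDiff ℝ 2 f
  mem : ∀ x, f x ∈ Set.Icc (0:ℝ) 1
  radial : ∀ x y : ℝ × ℝ, enorm2 x = enorm2 y → f x = f y
  supp : ∀ x : ℝ × ℝ, 3 < enorm2 x → f x = 0
  nontriv : ∃ x, f x ≠ 0

/-- The Kac kernel `k_γ(z) = c γ² 𝔎(γ·z)` (shortest periodic representative), `k_γ(0)=0`. -/
def kGamma (𝔎 : KacProfile) (N : ℕ) (c γ : ℝ) (z : Lat N) : ℝ :=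
  if z = 0 then 0 else c * γ^2 * 𝔎.f (γ * (latRep N z.1 : ℝ), γ * (latRep N z.2 : ℝ))

/-- `γ = N^{-1/2}`, so that `γ² = ε = 1/N`. -/
def gam (N : ℕ) : ℝ := Real.sqrt ((N : ℝ)⁻¹)

/-- Fourier transform `K̂_γ(ω) = Σ_z k_γ(z) e^{-iπ ω·(εz)}` of the macroscopic kernel
(real, since the kernel is even). -/
def kHat (N : ℕ) [NeZero N] (kk : Lat N → ℝ) (ω : ℤ × ℤ) : ℝ :=
  ∑ z : Lat N, kk z *
    Real.cos (Real.pi * ((ω.1 : ℝ) * (latRep N z.1 : ℝ) / N + (ω.2 : ℝ) * (latRep N z.2 : ℝ) / N))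

/-- The renormalisation constant
`𝔠_γ = (1/4) Σ_{ω ∈ Λ_N \ {0}} |K̂_γ(ω)|² / (γ^{-2} (1-K̂_γ(ω)))`. -/
def cGamma (N : ℕ) [NeZero N] (kk : Lat N → ℝ) (γ : ℝ) : ℝ :=
  (1/4) * ∑ z : Lat N, if z = (0 : Lat N) then 0 else
    (kHat N kk (latRep2 N z))^2 / ((γ^2)⁻¹ * (1 - kHat N kk (latRep2 N z)))

/-- Critical inverse temperature `β = 1 + γ²(𝔠_γ + A)`. -/
def betaCrit (𝔎 : KacProfile) (N : ℕ) [NeZero N] (c A : ℝ) : ℝ :=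
  1 + (gam N)^2 * (cGamma N (kGamma 𝔎 N c (gam N)) (gam N) + A)

/-- The fluctuation field `X_γ(x) = γ^{-1} Σ_z k_γ(ε^{-1}x - z) σ_z`, as a function on `Λ_N`. -/
def fluct (N : ℕ) [NeZero N] (kk : Lat N → ℝ) (γ : ℝ) (σ : Lat N → ℝ) (z : Lat N) : ℝ :=
  γ⁻¹ * ∑ y : Lat N, kk (z - y) * σ y

/-- The rescaled step field `γ^{-1} σ_{⌊ε^{-1}x⌋}` on the torus (without the `γ^{-1}`). -/
def stepField (N : ℕ) (σ : Lat N → ℝ) (x : ℝ × ℝ) : ℝ :=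
  σ (((⌊(N : ℝ) * x.1⌋ : ℤ) : ZMod (2*N)), ((⌊(N : ℝ) * x.2⌋ : ℤ) : ZMod (2*N)))

/-- Fourier coefficient on the torus: `ĝ(ω) = ∫_{𝕋²} g(x) e^{-iπω·x} dx`. -/
def cFT (g : ℝ × ℝ → ℂ) (ω : ℤ × ℤ) : ℂ :=
  ∫ x in box, g x * (starRingEnd ℂ) (eW ω x)


/-! ### Additional definitions -/

/-- Nearest-neighbour Dirichlet sum `Σ_{x,y ∈ Λ_ε, |x-y|=ε} ε² (f(y)-f(x))²`. -/
def nnSum (N : ℕ) [NeZero N] (f : Lat N → ℝ) : ℝ :=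
  ∑ x : Lat N, ((N : ℝ)^2)⁻¹ *
    ((f (x + (1, 0)) - f x)^2 + (f (x + (0, 1)) - f x)^2 +
     (f (x - (1, 0)) - f x)^2 + (f (x - (0, 1)) - f x)^2)

/-- The `d`-dimensional periodic lattice `Λ_N^d`. -/
abbrev LatD (d N : ℕ) : Type := Fin d → ZMod (2*N)

/-- Discrete `L^p` norm on `Λ_ε^d`, `p ∈ [1,∞]`. -/
def dLpD (d N : ℕ) [NeZero N] (p : ℝ≥0∞) (f : LatD d N → ℂ) : ℝ :=
  if p = ∞ then ⨆ z : LatD d N, ‖f z‖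
  else (∑ z : LatD d N, ((N : ℝ)^d)⁻¹ * ‖f z‖ ^ p.toReal) ^ (1/p.toReal)

/-- `Σ_{w ∈ Λ_N^d} χ(λ w) e_w`, evaluated at the lattice point `ε z ∈ Λ_ε^d`. -/
def gLam (d N : ℕ) [NeZero N] (χ : (Fin d → ℝ) → ℝ) (lam : ℝ) (z : LatD d N) : ℂ :=
  ∑ w : LatD d N, ((χ (fun i => lam * (latRep N (w i) : ℝ)) : ℝ) : ℂ) *
    Complex.exp ((Real.pi : ℂ) * Complex.I *
      ((∑ i : Fin d, (latRep N (w i) : ℝ) * ((latRep N (z i) : ℝ) / N) : ℝ) : ℂ))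

/-- Second partial derivative of `φ` in directions `v, w`. -/
def pd2 (φ : ℝ × ℝ → ℝ) (v w : ℝ × ℝ) : ℝ × ℝ → ℝ :=
  fun x => fderiv ℝ (fun y => fderiv ℝ φ y v) x w

/-- `max_{i,j ∈ {1,2}} ‖∂_i ∂_j φ‖_{L^∞}`. -/
def secondDerivBound (φ : ℝ × ℝ → ℝ) : ℝ :=
  max (max (⨆ x : ℝ × ℝ, |pd2 φ (1,0) (1,0) x|) (⨆ x : ℝ × ℝ, |pd2 φ (1,0) (0,1) x|))
      (max (⨆ x : ℝ × ℝ, |pd2 φ (0,1) (1,0) x|) (⨆ x : ℝ × ℝ, |pd2 φ (0,1) (0,1) x|))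

/-- The Littlewood–Paley block `δ_k g` of a function on the torus. -/
def cBlock (P : LPpartition) (k : ℤ) (g : ℝ × ℝ → ℂ) (x : ℝ × ℝ) : ℂ :=
  (1/4 : ℂ) * ∑' ω : ℤ × ℤ, ((LPchi P k ((ω.1 : ℝ), (ω.2 : ℝ)) : ℝ) : ℂ) * cFT g ω * eW ω x

/-- Besov norm `‖g‖_{B^ν_{1,1}(𝕋²)} = Σ_{k ≥ -1} 2^{νk} ‖δ_k g‖_{L¹(𝕋²)}`. -/
def cBesov11 (P : LPpartition) (ν : ℝ) (g : ℝ × ℝ → ℂ) : ℝ :=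
  ∑' k : ℕ, (2:ℝ) ^ (ν * ((k:ℝ) - 1)) * ∫ x in box, ‖cBlock P ((k:ℤ)-1) g x‖

open scoped NNReal

/-!
Write `h_x = ∑ y, k_γ (x - y) σ_y` for the local field, so that `X_γ = γ⁻¹ h`, and `m_n` for the
lattice average of the Gibbs expectations of `h_x ^ n`. Conditionally on the other spins `σ_y` has
mean `tanh (β h_y)`, and `h_x` depends on `σ_y` only through a term of size `k_γ ≤ K γ²`. Expanding
one factor of `h_x ^ (n + 2)`, replacing `σ_y` by `tanh (β h_y)` and separating
`tanh (β h_y) h_x ^ (n + 1)` by Young's inequality gives, after averaging over `x`, that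
`m_{n+2}` is at most the averaged expectation of `tanh (β h) ^ (n + 2)` plus
`O(γ²) (m_n + γ^(2n))`.

The cubic saturation `|tanh x| ≤ |x| - |x|³ / 27` on `[-2, 2]` turns this into a gain of
`m_{n+4} / 27` against a loss of `O(|β| - 1) m_{n+2}`. As soon as `|β| ≤ 1 + O(γ)`, the rescaled
moments `m_{2j} / γ^j` satisfy a recursion with constants independent of `N`, so that
`m_p = O(γ^(p/2))`.

The bound on `β` amounts to `𝔠_γ γ = O(1)`. The spectral gap `1 - K̂_γ(ω) ≥ q min(1, γ|ω|)²` bounds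
the contribution of the frequencies with `|ω| ≤ (q γ)^(-1/2)`, and Parseval's identity that of the
others.
-/

/-! ### Elementary inequalities -/

lemma sinh_add_cube_div_three_le_mul_cosh {x : ℝ} (hx : 0 ≤ x) :
    Real.sinh x + x ^ 3 / 3 ≤ x * Real.cosh x := by
  have hderiv (y : ℝ) : HasDerivAt (fun y ↦ y * Real.cosh y - (Real.sinh y + y ^ 3 / 3))
      (y * (Real.sinh y - y)) y := by
    refine (((hasDerivAt_id y).mul (Real.hasDerivAt_cosh y)).sub
      ((Real.hasDerivAt_sinh y).add ((hasDerivAt_pow 3 y).div_const 3))).congr_deriv ?_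
    norm_num
    ring
  have hmono : MonotoneOn (fun y ↦ y * Real.cosh y - (Real.sinh y + y ^ 3 / 3)) (Set.Ici 0) := by
    refine monotoneOn_of_hasDerivWithinAt_nonneg (convex_Ici 0)
      (fun y _ ↦ (hderiv y).continuousAt.continuousWithinAt)
      (fun y _ ↦ (hderiv y).hasDerivWithinAt) fun y hy ↦ ?_
    rw [interior_Ici, Set.mem_Ioi] at hy
    exact mul_nonneg hy.le (sub_nonneg.2 (Real.self_le_sinh_iff.2 hy.le))
  simpa using hmono Set.self_mem_Ici hx hx

lemma cosh_two_le_nine : Real.cosh 2 ≤ 9 := by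
  have hexp : Real.exp 2 ≤ 9 := by
    rw [← one_add_one_eq_two, Real.exp_add]
    nlinarith [Real.exp_one_lt_three, Real.exp_pos 1]
  have hneg : Real.exp (-2) ≤ 1 := Real.exp_le_one_iff.2 (by norm_num)
  rw [Real.cosh_eq]
  linarith

lemma tanh_le_sub_cube {x : ℝ} (hx0 : 0 ≤ x) (hx2 : x ≤ 2) : Real.tanh x ≤ x - x ^ 3 / 27 := by
  have hcosh : Real.cosh x ≤ 9 :=
    (Real.cosh_le_cosh.2 (by rwa [abs_of_nonneg hx0, abs_two])).trans cosh_two_le_nine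
  rw [Real.tanh_eq_sinh_div_cosh, div_le_iff₀ (Real.cosh_pos x)]
  linarith [sinh_add_cube_div_three_le_mul_cosh hx0,
    mul_le_mul_of_nonneg_left hcosh (by positivity : 0 ≤ x ^ 3 / 27)]

lemma tanh_monotone : Monotone Real.tanh := fun x y hxy ↦
  (Real.artanh_le_artanh_iff (Real.tanh_bijOn.mapsTo trivial)
    (Real.tanh_bijOn.mapsTo trivial)).1 (by simpa only [Real.artanh_tanh] using hxy)

lemma abs_tanh (x : ℝ) : |Real.tanh x| = Real.tanh |x| := by
  have hnonneg (y : ℝ) (hy : 0 ≤ y) : 0 ≤ Real.tanh y := by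
    simpa only [Real.tanh_zero] using tanh_monotone hy
  rcases abs_cases x with ⟨hx, h0⟩ | ⟨hx, h0⟩ <;> rw [hx]
  · exact abs_of_nonneg (hnonneg x h0)
  · rw [← abs_neg, ← Real.tanh_neg, abs_of_nonneg (hnonneg _ (by linarith))]

lemma one_add_pow_le_one_add_two_pow_mul {η : ℝ} (hη0 : 0 ≤ η) (hη1 : η ≤ 1) (p : ℕ) :
    (1 + η) ^ p ≤ 1 + 2 ^ p * η := by
  have hconv := (convexOn_pow p).2 (Set.mem_Ici.2 zero_le_one) (Set.mem_Ici.2 zero_le_two)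
    (sub_nonneg.2 hη1) hη0 (sub_add_cancel 1 η)
  simp only [smul_eq_mul, one_pow, mul_one] at hconv
  calc (1 + η) ^ p = (1 - η + η * 2) ^ p := by ring
    _ ≤ 1 - η + η * 2 ^ p := hconv
    _ ≤ 1 + 2 ^ p * η := by linarith

lemma tanh_mul_pow_le {β η h : ℝ} {p : ℕ} (hp : Even p) (hp0 : p ≠ 0) (hη0 : 0 ≤ η) (hη1 : η ≤ 1)
    (hβ : |β| ≤ 1 + η) (hh : |h| ≤ 1) :
    Real.tanh (β * h) ^ p ≤ (1 + 2 ^ p * η) * h ^ p - h ^ (p + 2) / 27 := by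
  set v := (1 + η) * |h|
  have hhv : |h| ≤ v := le_mul_of_one_le_left (abs_nonneg h) (by linarith)
  have hv0 : 0 ≤ v := (abs_nonneg h).trans hhv
  have hv2 : v ≤ 2 := by nlinarith [abs_nonneg h]
  have htanh : |Real.tanh (β * h)| ≤ v * (1 - v ^ 2 / 27) := by
    rw [abs_tanh, abs_mul]
    calc Real.tanh (|β| * |h|) ≤ Real.tanh v :=
          tanh_monotone (mul_le_mul_of_nonneg_right hβ (abs_nonneg h))
      _ ≤ v - v ^ 3 / 27 := tanh_le_sub_cube hv0 hv2
      _ = v * (1 - v ^ 2 / 27) := by ring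
  rw [← hp.pow_abs (Real.tanh _), ← hp.pow_abs h, ← (hp.add even_two).pow_abs h]
  calc |Real.tanh (β * h)| ^ p ≤ (v * (1 - v ^ 2 / 27)) ^ p := by gcongr
    _ = v ^ p * (1 - v ^ 2 / 27) ^ p := mul_pow _ _ _
    _ ≤ v ^ p * (1 - v ^ 2 / 27) := by
        gcongr
        exact pow_le_of_le_one (by nlinarith) (by nlinarith) hp0
    _ = (1 + η) ^ p * |h| ^ p - v ^ (p + 2) / 27 := by rw [← mul_pow]; ring
    _ ≤ (1 + 2 ^ p * η) * |h| ^ p - |h| ^ (p + 2) / 27 := by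
        gcongr
        exact one_add_pow_le_one_add_two_pow_mul hη0 hη1 p

lemma add_one_mul_pow_mul_le {a b : ℝ} (ha : 0 ≤ a) (hb : 0 ≤ b) (n : ℕ) :
    (n + 1) * (a ^ n * b) ≤ n * a ^ (n + 1) + b ^ (n + 1) := by
  induction n with
  | zero => simp
  | succ n ih =>
    have hmul := mul_le_mul_of_nonneg_right ih hb
    have hsq : 0 ≤ (n + 1) * a ^ n * (a - b) ^ 2 := by positivity
    push_cast
    ring_nf at *
    linarith

lemma add_two_mul_mul_pow_le {n : ℕ} (hn : Even n) (a b : ℝ) :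
    (n + 2) * (b * a ^ (n + 1)) ≤ (n + 1) * a ^ (n + 2) + b ^ (n + 2) := by
  have hyoung := add_one_mul_pow_mul_le (abs_nonneg a) (abs_nonneg b) (n + 1)
  have hle : b * a ^ (n + 1) ≤ |a| ^ (n + 1) * |b| := by
    rw [mul_comm, ← abs_pow, ← abs_mul]
    exact le_abs_self _
  have hn2 : Even (n + 1 + 1) := hn.add even_two
  rw [hn2.pow_abs, hn2.pow_abs] at hyoung
  push_cast at hyoung
  linarith [mul_le_mul_of_nonneg_left hle (by positivity : 0 ≤ (n : ℝ) + 2)]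

lemma abs_pow_succ_sub_pow_succ_le {n : ℕ} (hn : Even n) (h : ℝ) {d κ : ℝ} (hκ : 0 ≤ κ)
    (hd : |d| ≤ κ) :
    |h ^ (n + 1) - (h - d) ^ (n + 1)| ≤ κ * (n + 1) * (2 ^ n * (h ^ n + κ ^ n)) := by
  have hmax : max |h| |h - d| ≤ |h| + κ := max_le (by linarith) ((abs_sub _ _).trans (by linarith))
  have hpow : max |h| |h - d| ^ n ≤ 2 ^ n * (h ^ n + κ ^ n) := by
    rw [← hn.pow_abs h]
    exact (pow_le_pow_left₀ ((abs_nonneg h).trans (le_max_left _ _)) hmax n).trans <|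
      (add_pow_le (abs_nonneg h) hκ n).trans <|
        mul_le_mul_of_nonneg_right (pow_le_pow_right₀ one_le_two (Nat.sub_le n 1)) (by positivity)
  refine (abs_pow_sub_pow_le h (h - d) (n + 1)).trans ?_
  rw [sub_sub_cancel, Nat.add_sub_cancel]
  push_cast
  gcongr

lemma exists_forall_le_of_recursion {K : ℕ → ℝ} (hK : ∀ j, 0 ≤ K j) (k : ℕ) :
    ∃ C, 0 < C ∧ ∀ a : ℕ → ℝ, a 0 = 1 → a 1 ^ 2 ≤ a 2 →
      (∀ j, a (j + 2) ≤ K j * (a (j + 1) + a j + 1)) → a k ≤ C := by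
  induction k using Nat.twoStepInduction with
  | zero => exact ⟨1, one_pos, fun a h0 _ _ ↦ h0.le⟩
  | one =>
    refine ⟨K 0 + 2, by linarith [hK 0], fun a h0 h12 hrec ↦ ?_⟩
    by_contra! hlt
    have hquad : a 1 ^ 2 ≤ K 0 * (a 1 + 2) := (h12.trans (hrec 0)).trans_eq (by rw [h0]; ring)
    nlinarith [hK 0]
  | more j ihj ihj1 =>
    obtain ⟨C, hC, hCa⟩ := ihj
    obtain ⟨C', hC', hCa'⟩ := ihj1
    refine ⟨K j * (C' + C + 1) + 1, by have := hK j; positivity, fun a h0 h12 hrec ↦ ?_⟩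
    have hle : a (j + 2) ≤ K j * (C' + C + 1) := (hrec j).trans <|
      mul_le_mul_of_nonneg_left (by linarith [hCa a h0 h12 hrec, hCa' a h0 h12 hrec]) (hK j)
    linarith

/-! ### Ising models with row-stochastic couplings -/

section Ising

lemma abs_spin (b : Bool) : |spin b| = 1 := by cases b <;> simp [spin]

lemma spin_not (b : Bool) : spin (!b) = -spin b := by cases b <;> simp [spin]

lemma exp_spin_mul_mul_spin_sub_tanh (b : Bool) (u : ℝ) :
    Real.exp (spin b * u) * (spin b - Real.tanh u) = spin b / Real.cosh u := by
  rw [Real.tanh_eq_sinh_div_cosh, ← Real.cosh_add_sinh]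
  have hcosh := (Real.cosh_pos u).ne'
  cases b <;> simp only [spin, if_true, Bool.false_eq_true, if_false, one_mul, neg_mul,
    Real.cosh_neg, Real.sinh_neg] <;> field_simp <;> linarith [Real.cosh_sq_sub_sinh_sq u]

lemma exp_mul_spin_not_sub_tanh (b : Bool) (u : ℝ) :
    Real.exp (-2 * (spin b * u)) * (spin (!b) - Real.tanh u) = -(spin b - Real.tanh u) := by
  have hexp : -2 * (spin b * u) = spin (!b) * u - spin b * u := by rw [spin_not]; ring
  rw [hexp, Real.exp_sub, div_mul_eq_mul_div, exp_spin_mul_mul_spin_sub_tanh, spin_not, neg_div,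
    ← exp_spin_mul_mul_spin_sub_tanh, neg_div, mul_div_cancel_left₀ _ (Real.exp_pos _).ne']

variable {V : Type*} [DecidableEq V]

/-- The configuration `s` with the spin at `y` reversed. -/
def flipAt (y : V) (s : V → Bool) : V → Bool := Function.update s y (!s y)

lemma spin_flipAt_self (y : V) (s : V → Bool) :
    spin (flipAt y s y) = -spin (s y) := by
  simp [flipAt, spin_not]

lemma spin_flipAt (y : V) (s : V → Bool) (x : V) :
    spin (flipAt y s x) = spin (s x) - if x = y then 2 * spin (s y) else 0 := by
  rcases eq_or_ne x y with rfl | hxy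
  · rw [spin_flipAt_self, if_pos rfl]
    ring
  · simp [flipAt, hxy]

variable [Fintype V] {J : Matrix V V ℝ} {β κ η : ℝ}

/-- The local field `h_x = ∑ y, J x y * σ_y` acting on the spin at `x`. -/
def localField (J : Matrix V V ℝ) (s : V → Bool) (x : V) : ℝ := ∑ y, J x y * spin (s y)

/-- The unnormalised Gibbs weight at inverse temperature `β` and zero external field. -/
def gibbsWeight (J : Matrix V V ℝ) (β : ℝ) (s : V → Bool) : ℝ :=
  Real.exp (β / 2 * ∑ x, spin (s x) * localField J s x)

lemma abs_localField_le_one (hJ : J ∈ Matrix.rowStochastic ℝ V) (s : V → Bool) (x : V) :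
    |localField J s x| ≤ 1 := by
  refine (Finset.abs_sum_le_sum_abs _ _).trans_eq ?_
  simp only [abs_mul, abs_spin, mul_one, abs_of_nonneg (Matrix.nonneg_of_mem_rowStochastic hJ),
    Matrix.sum_row_of_mem_rowStochastic hJ]

/-- The Gibbs expectation, as a linear functional on observables. -/
def gibbsMean (J : Matrix V V ℝ) (β : ℝ) : ((V → Bool) → ℝ) →ₗ[ℝ] ℝ :=
  (∑ s, gibbsWeight J β s)⁻¹ • ∑ s, gibbsWeight J β s • LinearMap.proj s

lemma gibbsMean_apply (F : (V → Bool) → ℝ) :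
    gibbsMean J β F = (∑ s, gibbsWeight J β s)⁻¹ * ∑ s, gibbsWeight J β s * F s := by
  simp [gibbsMean]

lemma gibbsMean_mono {F G : (V → Bool) → ℝ} (h : ∀ s, F s ≤ G s) :
    gibbsMean J β F ≤ gibbsMean J β G := by
  have hw (s : V → Bool) : 0 ≤ gibbsWeight J β s := (Real.exp_pos _).le
  simp only [gibbsMean_apply]
  gcongr with s
  · exact inv_nonneg.2 (Finset.sum_nonneg fun s _ ↦ hw s)
  · exact hw s
  · exact h s

lemma gibbsMean_const (a : ℝ) : gibbsMean J β (fun _ ↦ a) = a := by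
  have hZ : 0 < ∑ s, gibbsWeight J β s :=
    Finset.sum_pos (fun _ _ ↦ Real.exp_pos _) Finset.univ_nonempty
  rw [gibbsMean_apply, ← Finset.sum_mul, inv_mul_cancel_left₀ hZ.ne']

/-- The mean of `φ (h_x)` when `x` is uniformly distributed and independent of the spins. -/
def fieldMean (J : Matrix V V ℝ) (β : ℝ) : (ℝ → ℝ) →ₗ[ℝ] ℝ :=
  (Fintype.card V : ℝ)⁻¹ •
    ∑ x, gibbsMean J β ∘ₗ LinearMap.funLeft ℝ ℝ fun s ↦ localField J s x

lemma fieldMean_apply (φ : ℝ → ℝ) :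
    fieldMean J β φ =
      (Fintype.card V : ℝ)⁻¹ * ∑ x, gibbsMean J β (fun s ↦ φ (localField J s x)) := by
  simp [fieldMean, LinearMap.funLeft, Function.comp_def]

lemma fieldMean_mono (hJ : J ∈ Matrix.rowStochastic ℝ V) {φ ψ : ℝ → ℝ}
    (h : ∀ t, |t| ≤ 1 → φ t ≤ ψ t) : fieldMean J β φ ≤ fieldMean J β ψ := by
  simp only [fieldMean_apply]
  gcongr with x
  exact gibbsMean_mono fun s ↦ h _ (abs_localField_le_one hJ s x)

lemma fieldMean_const [Nonempty V] (a : ℝ) : fieldMean J β (fun _ ↦ a) = a := by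
  simp [fieldMean_apply, gibbsMean_const]

lemma fieldMean_sq_le [Nonempty V] (hJ : J ∈ Matrix.rowStochastic ℝ V) (φ : ℝ → ℝ) :
    fieldMean J β φ ^ 2 ≤ fieldMean J β (φ ^ 2) := by
  set m := fieldMean J β φ with hm
  have hlin : fieldMean J β (φ ^ 2 - (2 * m) • φ + fun _ ↦ m ^ 2) =
      fieldMean J β (φ ^ 2) - m ^ 2 := by
    rw [map_add, map_sub, map_smul, fieldMean_const, ← hm, smul_eq_mul]
    ring
  have hnonneg : 0 ≤ fieldMean J β (φ ^ 2 - (2 * m) • φ + fun _ ↦ m ^ 2) := by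
    rw [← fieldMean_const (J := J) (β := β) 0]
    refine fieldMean_mono hJ fun t _ ↦ (sq_nonneg (φ t - m)).trans_eq ?_
    simp only [Pi.add_apply, Pi.sub_apply, Pi.pow_apply, Pi.smul_apply, smul_eq_mul]
    ring
  linarith

lemma localField_flipAt (s : V → Bool) (x y : V) :
    localField J (flipAt y s) x = localField J s x - 2 * (J x y * spin (s y)) := by
  simp only [localField, spin_flipAt, mul_sub, Finset.sum_sub_distrib, mul_ite, mul_zero,
    Finset.sum_ite_eq', Finset.mem_univ, if_true]
  ring

lemma sum_spin_mul_localField_flipAt (hsymm : J.IsSymm) (hdiag : ∀ x, J x x = 0)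
    (y : V) (s : V → Bool) :
    ∑ x, spin (flipAt y s x) * localField J (flipAt y s) x =
      ∑ x, spin (s x) * localField J s x - 4 * (spin (s y) * localField J s y) := by
  have hcol : ∑ x, spin (s x) * (2 * (J x y * spin (s y))) =
      2 * (spin (s y) * localField J s y) := by
    simp only [localField, Finset.mul_sum, ← hsymm.apply y]
    exact Finset.sum_congr rfl fun x _ ↦ by ring
  simp only [spin_flipAt, localField_flipAt, sub_mul, mul_sub, Finset.sum_sub_distrib, ite_mul,
    zero_mul, Finset.sum_ite_eq', Finset.mem_univ, if_true, hdiag, hcol]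
  ring

lemma gibbsWeight_flipAt (hsymm : J.IsSymm) (hdiag : ∀ x, J x x = 0) (y : V) (s : V → Bool) :
    gibbsWeight J β (flipAt y s) =
      gibbsWeight J β s * Real.exp (-2 * (spin (s y) * (β * localField J s y))) := by
  rw [gibbsWeight, gibbsWeight, sum_spin_mul_localField_flipAt hsymm hdiag, ← Real.exp_add]
  ring_nf

/-- Conditionally on the other spins, `σ_y` has mean `tanh (β h_y)`. -/
lemma gibbsMean_spin_sub_tanh_mul (hsymm : J.IsSymm) (hdiag : ∀ x, J x x = 0)
    (y : V) {G : (V → Bool) → ℝ} (hG : ∀ s, G (flipAt y s) = G s) :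
    gibbsMean J β (fun s ↦ (spin (s y) - Real.tanh (β * localField J s y)) * G s) = 0 := by
  have hodd (s : V → Bool) :
      gibbsWeight J β (flipAt y s) *
          ((spin (flipAt y s y) - Real.tanh (β * localField J (flipAt y s) y)) * G (flipAt y s)) =
        -(gibbsWeight J β s * ((spin (s y) - Real.tanh (β * localField J s y)) * G s)) := by
    have hfield : localField J (flipAt y s) y = localField J s y := by
      rw [localField_flipAt, hdiag, zero_mul, mul_zero, sub_zero]
    rw [gibbsWeight_flipAt hsymm hdiag, hfield, hG, spin_flipAt_self, ← spin_not, mul_assoc,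
      ← mul_assoc (Real.exp _), exp_mul_spin_not_sub_tanh]
    ring
  have hsum : ∑ s, gibbsWeight J β s *
      ((spin (s y) - Real.tanh (β * localField J s y)) * G s) = 0 := by
    refine Finset.sum_involution (fun s _ ↦ flipAt y s) (fun s _ ↦ by rw [hodd, add_neg_cancel])
      (fun s _ _ h ↦ ?_) (fun _ _ ↦ Finset.mem_univ _) (fun s _ ↦ ?_)
    · simpa [flipAt] using congrFun h y
    · simp [flipAt]
  rw [gibbsMean_apply, hsum, mul_zero]

/-- `h_x` is replaced by `h_x - J x y * σ_y`, which does not feel the spin at `y`. -/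
lemma gibbsMean_spin_sub_tanh_mul_pow_le (hJ : J ∈ Matrix.rowStochastic ℝ V) (hsymm : J.IsSymm)
    (hdiag : ∀ x, J x x = 0) (hκ : ∀ x y, J x y ≤ κ) {n : ℕ} (hn : Even n) (x y : V) :
    gibbsMean J β (fun s ↦
        (spin (s y) - Real.tanh (β * localField J s y)) * localField J s x ^ (n + 1)) ≤
      gibbsMean J β (fun s ↦
        2 ^ (n + 1) * (n + 1) * κ * (localField J s x ^ n + κ ^ n)) := by
  have hJxy : 0 ≤ J x y := Matrix.nonneg_of_mem_rowStochastic hJ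
  have hκ0 : 0 ≤ κ := hJxy.trans (hκ x y)
  have hzero := gibbsMean_spin_sub_tanh_mul (β := β) hsymm hdiag y
    (G := fun s ↦ (localField J s x - J x y * spin (s y)) ^ (n + 1)) fun s ↦ by
      rw [localField_flipAt, spin_flipAt_self]
      ring
  rw [← sub_zero (gibbsMean J β _), ← hzero, ← map_sub]
  refine gibbsMean_mono fun s ↦ ?_
  rw [Pi.sub_apply, ← mul_sub]
  set h := localField J s x
  set d := J x y * spin (s y)
  have hd : |d| ≤ κ := by rw [abs_mul, abs_spin, mul_one, abs_of_nonneg hJxy]; exact hκ x y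
  have hspin : |spin (s y) - Real.tanh (β * localField J s y)| ≤ 2 := by
    have := abs_sub (spin (s y)) (Real.tanh (β * localField J s y))
    linarith [abs_spin (s y), Real.abs_tanh_lt_one (β * localField J s y)]
  have hpow := abs_pow_succ_sub_pow_succ_le hn h hκ0 hd
  calc _ ≤ |spin (s y) - Real.tanh (β * localField J s y)| * |h ^ (n + 1) - (h - d) ^ (n + 1)| :=
        (le_abs_self _).trans_eq (abs_mul _ _)
    _ ≤ 2 * (κ * (n + 1) * (2 ^ n * (h ^ n + κ ^ n))) := by gcongr
    _ = _ := by ring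

lemma add_two_mul_gibbsMean_spin_mul_pow_le (hJ : J ∈ Matrix.rowStochastic ℝ V)
    (hsymm : J.IsSymm) (hdiag : ∀ x, J x x = 0) (hκ : ∀ x y, J x y ≤ κ) {n : ℕ} (hn : Even n)
    (x y : V) :
    (n + 2) * gibbsMean J β (fun s ↦ spin (s y) * localField J s x ^ (n + 1)) ≤
      (n + 1) * gibbsMean J β (fun s ↦ localField J s x ^ (n + 2)) +
        gibbsMean J β (fun s ↦ Real.tanh (β * localField J s y) ^ (n + 2)) +
        (n + 2) * gibbsMean J β (fun s ↦
          2 ^ (n + 1) * (n + 1) * κ * (localField J s x ^ n + κ ^ n)) := by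
  have herr := gibbsMean_spin_sub_tanh_mul_pow_le (β := β) hJ hsymm hdiag hκ hn x y
  set h := fun s : V → Bool ↦ localField J s x
  set τ := fun s : V → Bool ↦ Real.tanh (β * localField J s y)
  have hyoung : (n + 2) * gibbsMean J β (fun s ↦ τ s * h s ^ (n + 1)) ≤
      (n + 1) * gibbsMean J β (fun s ↦ h s ^ (n + 2)) +
        gibbsMean J β (fun s ↦ τ s ^ (n + 2)) := by
    simp only [← smul_eq_mul (_ + _ : ℝ), ← map_smul, ← map_add]
    exact gibbsMean_mono fun s ↦ add_two_mul_mul_pow_le hn (h s) (τ s)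
  have hsub : gibbsMean J β (fun s ↦ (spin (s y) - τ s) * h s ^ (n + 1)) =
      gibbsMean J β (fun s ↦ spin (s y) * h s ^ (n + 1)) -
        gibbsMean J β (fun s ↦ τ s * h s ^ (n + 1)) := by
    simp only [← map_sub, sub_mul, Pi.sub_def]
  have hmul := mul_le_mul_of_nonneg_left (hsub.symm.trans_le herr) (by positivity : 0 ≤ (n : ℝ) + 2)
  linarith

lemma gibbsMean_localField_pow_le (hJ : J ∈ Matrix.rowStochastic ℝ V) (hsymm : J.IsSymm)
    (hdiag : ∀ x, J x x = 0) (hκ : ∀ x y, J x y ≤ κ) {n : ℕ} (hn : Even n) (x : V) :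
    gibbsMean J β (fun s ↦ localField J s x ^ (n + 2)) ≤
      ∑ y, J x y * gibbsMean J β (fun s ↦ Real.tanh (β * localField J s y) ^ (n + 2)) +
        (n + 2) * gibbsMean J β (fun s ↦
          2 ^ (n + 1) * (n + 1) * κ * (localField J s x ^ n + κ ^ n)) := by
  have hspin := add_two_mul_gibbsMean_spin_mul_pow_le (β := β) hJ hsymm hdiag hκ hn x
  have hexpand : gibbsMean J β (fun s ↦ localField J s x ^ (n + 2)) =
      ∑ y, J x y * gibbsMean J β (fun s ↦ spin (s y) * localField J s x ^ (n + 1)) := by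
    simp only [← smul_eq_mul (J x _), ← map_smul, ← map_sum]
    congr 1 with s
    simp only [Finset.sum_apply, Pi.smul_apply, smul_eq_mul, ← mul_assoc, ← Finset.sum_mul]
    exact pow_succ' (localField J s x) (n + 1)
  set G := gibbsMean J β (fun s ↦ localField J s x ^ (n + 2))
  set T := fun y ↦ gibbsMean J β (fun s ↦ Real.tanh (β * localField J s y) ^ (n + 2))
  set E := gibbsMean J β (fun s ↦ 2 ^ (n + 1) * (n + 1) * κ * (localField J s x ^ n + κ ^ n))
  have hsum : (n + 2) * G ≤ (n + 1) * G + ∑ y, J x y * T y + (n + 2) * E := by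
    calc (n + 2) * G =
          ∑ y, J x y * ((n + 2) *
            gibbsMean J β (fun s ↦ spin (s y) * localField J s x ^ (n + 1))) := by
          rw [hexpand, Finset.mul_sum]
          simp only [mul_left_comm _ (J x _)]
      _ ≤ ∑ y, J x y * ((n + 1) * G + T y + (n + 2) * E) := Finset.sum_le_sum fun y _ ↦
          mul_le_mul_of_nonneg_left (hspin y) (Matrix.nonneg_of_mem_rowStochastic hJ)
      _ = (n + 1) * G + ∑ y, J x y * T y + (n + 2) * E := by
          simp only [mul_add, Finset.sum_add_distrib, ← Finset.sum_mul,
            Matrix.sum_row_of_mem_rowStochastic hJ, one_mul]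
  linarith

lemma fieldMean_pow_le (hJ : J ∈ Matrix.rowStochastic ℝ V) (hsymm : J.IsSymm)
    (hdiag : ∀ x, J x x = 0) (hκ : ∀ x y, J x y ≤ κ) {n : ℕ} (hn : Even n) :
    fieldMean J β (fun t ↦ t ^ (n + 2)) ≤ fieldMean J β (fun t ↦ Real.tanh (β * t) ^ (n + 2)) +
      (n + 2) * fieldMean J β (fun t ↦ 2 ^ (n + 1) * (n + 1) * κ * (t ^ n + κ ^ n)) := by
  simp only [fieldMean_apply]
  rw [mul_left_comm, ← mul_add]
  gcongr
  refine (Finset.sum_le_sum fun x _ ↦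
    gibbsMean_localField_pow_le hJ hsymm hdiag hκ hn x).trans_eq ?_
  rw [Finset.sum_add_distrib, Finset.sum_comm, ← Finset.mul_sum]
  simp only [← Finset.sum_mul, ← hsymm.apply, Matrix.sum_row_of_mem_rowStochastic hJ, one_mul]

lemma fieldMean_pow_add_four_le [Nonempty V] (hJ : J ∈ Matrix.rowStochastic ℝ V)
    (hsymm : J.IsSymm) (hdiag : ∀ x, J x x = 0) (hκ : ∀ x y, J x y ≤ κ) (hη0 : 0 ≤ η) (hη1 : η ≤ 1)
    (hβ : |β| ≤ 1 + η) {n : ℕ} (hn : Even n) :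
    fieldMean J β (fun t ↦ t ^ (n + 4)) ≤
      27 * (2 ^ (n + 2) * η * fieldMean J β (fun t ↦ t ^ (n + 2)) +
        (n + 2) * (2 ^ (n + 1) * (n + 1) * κ * (fieldMean J β (fun t ↦ t ^ n) + κ ^ n))) := by
  have hfield := fieldMean_pow_le (β := β) hJ hsymm hdiag hκ hn
  have htanh : fieldMean J β (fun t ↦ Real.tanh (β * t) ^ (n + 2)) ≤
      (1 + 2 ^ (n + 2) * η) * fieldMean J β (fun t ↦ t ^ (n + 2)) -
        27⁻¹ * fieldMean J β (fun t ↦ t ^ (n + 4)) := by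
    simp only [← smul_eq_mul _ (fieldMean J β _), ← map_smul, ← map_sub]
    refine fieldMean_mono hJ fun t ht ↦ (tanh_mul_pow_le (hn.add even_two) (by lia) hη0 hη1 hβ
      ht).trans_eq ?_
    simp only [Pi.sub_apply, Pi.smul_apply, smul_eq_mul]
    ring
  have herr (c : ℝ) : fieldMean J β (fun t ↦ c * (t ^ n + κ ^ n)) =
      c * (fieldMean J β (fun t ↦ t ^ n) + κ ^ n) := by
    calc _ = fieldMean J β (c • ((fun t ↦ t ^ n) + fun _ ↦ κ ^ n)) := rfl
      _ = _ := by rw [map_smul, map_add, fieldMean_const, smul_eq_mul]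
  rw [herr] at hfield
  linarith

lemma fieldMean_pow_div_le [Nonempty V] {K γ : ℝ} (hJ : J ∈ Matrix.rowStochastic ℝ V)
    (hsymm : J.IsSymm) (hdiag : ∀ x, J x x = 0) (hK : 0 ≤ K) (hγ : 0 < γ) (hγ1 : γ ≤ 1)
    (hJγ : ∀ x y, J x y ≤ K * γ ^ 2) (hβ : |β| ≤ 1 + K * γ) (hKγ : K * γ ≤ 1) (j : ℕ) :
    fieldMean J β (fun t ↦ t ^ (2 * (j + 2))) / γ ^ (j + 2) ≤
      27 * K * (2 ^ (2 * j + 2) + (2 * j + 2) * (2 ^ (2 * j + 1) * (2 * j + 1))) *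
        (fieldMean J β (fun t ↦ t ^ (2 * (j + 1))) / γ ^ (j + 1) +
          fieldMean J β (fun t ↦ t ^ (2 * j)) / γ ^ j + 1) := by
  have hstep := fieldMean_pow_add_four_le hJ hsymm hdiag hJγ (by positivity) hKγ hβ (even_two_mul j)
  have hnonneg (i : ℕ) : 0 ≤ fieldMean J β (fun t ↦ t ^ (2 * i)) := by
    rw [← fieldMean_const (J := J) (β := β) 0]
    exact fieldMean_mono hJ fun t _ ↦ (even_two_mul i).pow_nonneg t
  set m₂ := fieldMean J β (fun t ↦ t ^ (2 * j + 4))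
  set m₁ := fieldMean J β (fun t ↦ t ^ (2 * j + 2))
  set m₀ := fieldMean J β (fun t ↦ t ^ (2 * j))
  have hsmall : (K * γ ^ 2) ^ (2 * j) ≤ γ ^ j := by
    have hle : K * γ ^ 2 ≤ γ := by nlinarith
    exact (pow_le_pow_left₀ (by positivity) hle _).trans
      (pow_le_pow_of_le_one hγ.le hγ1 (by lia))
  set P : ℝ := 2 ^ (2 * j + 2)
  set Q : ℝ := (2 * j + 2) * (2 ^ (2 * j + 1) * (2 * j + 1))
  have hm₁ : 0 ≤ m₁ := hnonneg (j + 1)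
  have hm₀ : 0 ≤ m₀ := hnonneg j
  have hrest : 0 ≤ 27 * K * (Q * γ * m₁ + P * γ ^ 2 * (m₀ + γ ^ j)) := by positivity
  push_cast at hstep
  change m₂ / γ ^ (j + 2) ≤ 27 * K * (P + Q) * (m₁ / γ ^ (j + 1) + m₀ / γ ^ j + 1)
  rw [div_le_iff₀ (by positivity)]
  calc m₂ ≤ 27 * (P * (K * γ) * m₁ + Q * (K * γ ^ 2) * (m₀ + γ ^ j)) := by
        refine hstep.trans ?_
        rw [← mul_assoc (2 * (j : ℝ) + 2), ← mul_assoc (2 * (j : ℝ) + 2)]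
        gcongr
    _ ≤ 27 * K * (P + Q) * (γ * m₁ + γ ^ 2 * (m₀ + γ ^ j)) := by linarith
    _ = 27 * K * (P + Q) * (m₁ / γ ^ (j + 1) + m₀ / γ ^ j + 1) * γ ^ (j + 2) := by
        field_simp
        ring

theorem exists_fieldMean_pow_le {K : ℝ} (hK : 0 ≤ K) (k : ℕ) :
    ∃ C, 0 < C ∧ ∀ {V : Type*} [DecidableEq V] [Fintype V] [Nonempty V] {J : Matrix V V ℝ}
      {β γ : ℝ}, J ∈ Matrix.rowStochastic ℝ V → J.IsSymm → (∀ x, J x x = 0) → 0 < γ → γ ≤ 1 →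
      (∀ x y, J x y ≤ K * γ ^ 2) → |β| ≤ 1 + K * γ → K * γ ≤ 1 →
      fieldMean J β (fun t ↦ t ^ (2 * k)) ≤ C * γ ^ k := by
  obtain ⟨C, hC, hbound⟩ := exists_forall_le_of_recursion
    (K := fun j ↦ 27 * K * (2 ^ (2 * j + 2) + (2 * j + 2) * (2 ^ (2 * j + 1) * (2 * j + 1))))
    (fun j ↦ by positivity) k
  refine ⟨C, hC, fun {V _ _ _ J β γ} hJ hsymm hdiag hγ hγ1 hκ hβ hKγ ↦ ?_⟩
  set m := fun j : ℕ ↦ fieldMean J β (fun t ↦ t ^ (2 * j))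
  have hm0 : m 0 = 1 := by simp only [m, mul_zero, pow_zero, fieldMean_const]
  have hm12 : m 1 ^ 2 ≤ m 2 :=
    (fieldMean_sq_le hJ fun t ↦ t ^ (2 * 1)).trans_eq <| by
      simp only [m, Pi.pow_def, ← pow_mul, mul_one]
  rw [← div_le_iff₀ (by positivity)]
  refine hbound (fun j ↦ m j / γ ^ j) (by simp [hm0]) ?_
    fun j ↦ fieldMean_pow_div_le hJ hsymm hdiag hK hγ hγ1 hκ hβ hKγ j
  rw [div_pow, ← pow_mul, one_mul]
  gcongr

end Ising

/-! ### The periodic lattice and its characters -/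

lemma sum_normSq_sum_mul_primitive {R : Type*} [CommRing R] [Fintype R] {ψ : AddChar R ℂ}
    (hψ : ψ.IsPrimitive) (f : R → ℂ) :
    ∑ w, Complex.normSq (∑ z, f z * ψ (w * z)) =
      Fintype.card R * ∑ z, Complex.normSq (f z) := by
  classical
  have hexpand (w : R) : (Complex.normSq (∑ z, f z * ψ (w * z)) : ℂ) =
      ∑ z, ∑ z', f z * starRingEnd ℂ (f z') * ψ (w * (z - z')) := by
    rw [← Complex.mul_conj, map_sum, Finset.sum_mul_sum]
    refine Finset.sum_congr rfl fun z _ ↦ Finset.sum_congr rfl fun z' _ ↦ ?_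
    rw [map_mul (starRingEnd ℂ), ← AddChar.map_neg_eq_conj, mul_sub, sub_eq_add_neg,
      AddChar.map_add_eq_mul]
    ring
  suffices h : ∑ w, (Complex.normSq (∑ z, f z * ψ (w * z)) : ℂ) =
      Fintype.card R * ∑ z, (Complex.normSq (f z) : ℂ) by exact_mod_cast h
  simp only [hexpand]
  rw [Finset.sum_comm, Finset.mul_sum]
  refine Finset.sum_congr rfl fun z _ ↦ ?_
  rw [Finset.sum_comm]
  simp only [← Finset.mul_sum, AddChar.sum_mulShift _ hψ, sub_eq_zero, mul_ite, mul_zero,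
    Nat.cast_ite, Nat.cast_zero]
  rw [Finset.sum_ite_eq, if_pos (Finset.mem_univ z), Complex.mul_conj, mul_comm]

section Lattice

variable {N : ℕ} [NeZero N]

lemma latRep_eq_valMinAbs (v : ZMod (2 * N)) : latRep N v = v.valMinAbs := by
  rw [ZMod.valMinAbs_def_pos, Nat.mul_div_cancel_left N two_pos]
  simp only [latRep, Nat.cast_le, Nat.cast_mul, Nat.cast_ofNat]

lemma intCast_latRep (v : ZMod (2 * N)) : (latRep N v : ZMod (2 * N)) = v := by
  rw [latRep_eq_valMinAbs, ZMod.coe_valMinAbs]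

lemma latRep2_injective : Function.Injective (latRep2 N) := fun z z' h ↦ by
  rw [latRep2, latRep2, Prod.mk.injEq] at h
  ext
  · rw [← intCast_latRep z.1, h.1, intCast_latRep]
  · rw [← intCast_latRep z.2, h.2, intCast_latRep]

lemma latRep2_eq_zero {z : Lat N} : latRep2 N z = 0 ↔ z = 0 := by
  rw [← latRep2_injective.eq_iff (a := z)]
  simp [latRep2, latRep]

lemma abs_latRep_le (v : ZMod (2 * N)) : |latRep N v| ≤ N := by
  have h := ZMod.natAbs_valMinAbs_le v
  rw [latRep_eq_valMinAbs, Int.abs_eq_natAbs]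
  lia

lemma latRep_neg_sq (v : ZMod (2 * N)) : latRep N (-v) ^ 2 = latRep N v ^ 2 := by
  rw [latRep_eq_valMinAbs, latRep_eq_valMinAbs, ← Int.natAbs_sq, ZMod.natAbs_valMinAbs_neg,
    Int.natAbs_sq]

lemma latRep_intCast {a : ℤ} (ha : |a| < N) : latRep N (a : ZMod (2 * N)) = a := by
  rw [latRep_eq_valMinAbs, ZMod.valMinAbs_spec]
  rw [abs_lt] at ha
  push_cast
  exact ⟨rfl, by linarith, by linarith⟩

lemma latRep2_intCast {w : ℤ × ℤ} (hw : ‖w‖ < N) : latRep2 N (w.1, w.2) = w := by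
  rw [Prod.norm_def, max_lt_iff, Int.norm_eq_abs, Int.norm_eq_abs] at hw
  exact Prod.ext (latRep_intCast (by exact_mod_cast hw.1)) (latRep_intCast (by exact_mod_cast hw.2))

lemma sum_le_sum_latRep2 {S : Finset (ℤ × ℤ)} (hS : ∀ w ∈ S, ‖w‖ < N) {F : ℤ × ℤ → ℝ}
    (hF : ∀ w, 0 ≤ F w) : ∑ w ∈ S, F w ≤ ∑ z, F (latRep2 N z) := by
  calc ∑ w ∈ S, F w ≤ ∑ w ∈ Finset.univ.image (latRep2 N), F w :=
        Finset.sum_le_sum_of_subset_of_nonneg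
          (fun w hw ↦ Finset.mem_image.2 ⟨_, Finset.mem_univ _, latRep2_intCast (hS w hw)⟩)
          fun w _ _ ↦ hF w
    _ = ∑ z, F (latRep2 N z) := Finset.sum_image latRep2_injective.injOn

lemma card_norm_latRep2_le {R : ℝ} (hR : 0 ≤ R) :
    (Finset.card {z : Lat N | ‖latRep2 N z‖ ≤ R} : ℝ) ≤ (2 * R + 1) ^ 2 := by
  have hcard : Finset.card {z : Lat N | ‖latRep2 N z‖ ≤ R} ≤
      (Finset.Icc (-⌊R⌋) ⌊R⌋ ×ˢ Finset.Icc (-⌊R⌋) ⌊R⌋).card := by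
    refine Finset.card_le_card_of_injOn (latRep2 N) (fun z hz ↦ ?_) latRep2_injective.injOn
    simpa [Prod.norm_def, Prod.le_def, Int.norm_eq_abs, abs_le, ← Int.ceil_neg, Int.ceil_le,
      Int.le_floor, and_and_and_comm] using hz
  have hIcc : ((Finset.Icc (-⌊R⌋) ⌊R⌋).card : ℝ) ≤ 2 * R + 1 := by
    have hfloor : ((Finset.Icc (-⌊R⌋) ⌊R⌋).card : ℤ) = 2 * ⌊R⌋ + 1 := by
      have := Int.floor_nonneg.2 hR
      rw [Int.card_Icc]
      lia
    have hcast : ((Finset.Icc (-⌊R⌋) ⌊R⌋).card : ℝ) = 2 * ⌊R⌋ + 1 := by exact_mod_cast hfloor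
    linarith [Int.floor_le R]
  calc (Finset.card {z : Lat N | ‖latRep2 N z‖ ≤ R} : ℝ)
      ≤ ((Finset.Icc (-⌊R⌋) ⌊R⌋).card : ℝ) ^ 2 := by
        rw [sq]
        exact_mod_cast hcard.trans_eq (Finset.card_product _ _)
    _ ≤ (2 * R + 1) ^ 2 := by gcongr

variable (N) in
/-- The character `z ↦ exp (iπ (z₁ + z₂) / N)` of the ring `Λ_N`; the Fourier mode of frequency `w`
is then `z ↦ latChar N (w * z)`, with the componentwise product. -/
def latChar : AddChar (Lat N) ℂ :=
  ZMod.stdAddChar.compAddMonoidHom (AddMonoidHom.fst _ _) *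
    ZMod.stdAddChar.compAddMonoidHom (AddMonoidHom.snd _ _)

lemma latChar_apply (z : Lat N) :
    latChar N z = ZMod.stdAddChar z.1 * ZMod.stdAddChar z.2 := rfl

lemma latChar_isPrimitive : (latChar N).IsPrimitive := by
  intro w hw hone
  refine hw (Prod.ext ?_ ?_)
  · by_contra h
    refine ZMod.isPrimitive_stdAddChar (2 * N) h (DFunLike.ext _ _ fun x ↦ ?_)
    simpa [AddChar.mulShift_apply, latChar_apply] using DFunLike.congr_fun hone (x, 0)
  · by_contra h
    refine ZMod.isPrimitive_stdAddChar (2 * N) h (DFunLike.ext _ _ fun x ↦ ?_)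
    simpa [AddChar.mulShift_apply, latChar_apply] using DFunLike.congr_fun hone (0, x)

lemma stdAddChar_mul_eq_exp (v x : ZMod (2 * N)) : ZMod.stdAddChar (v * x) =
    Complex.exp ((Real.pi * ((latRep N v : ℝ) * latRep N x / N) : ℝ) * Complex.I) := by
  have hN : (N : ℂ) ≠ 0 := Nat.cast_ne_zero.2 (NeZero.ne N)
  have hmul : v * x = ((latRep N v * latRep N x : ℤ) : ZMod (2 * N)) := by
    rw [Int.cast_mul, intCast_latRep, intCast_latRep]
  rw [hmul, ZMod.stdAddChar_coe]
  congr 1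
  push_cast
  field_simp

lemma kHat_latRep2_eq_re (kk : Lat N → ℝ) (w : Lat N) :
    kHat N kk (latRep2 N w) = (∑ z, (kk z : ℂ) * latChar N (w * z)).re := by
  rw [Complex.re_sum]
  refine Finset.sum_congr rfl fun z _ ↦ ?_
  rw [Complex.re_ofReal_mul, latChar_apply, Prod.fst_mul, Prod.snd_mul, stdAddChar_mul_eq_exp,
    stdAddChar_mul_eq_exp, ← Complex.exp_add, ← add_mul, ← Complex.ofReal_add, ← mul_add,
    Complex.exp_ofReal_mul_I_re]
  rfl

lemma card_lat : (Fintype.card (Lat N) : ℝ) = 4 * (N : ℝ) ^ 2 := by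
  rw [Fintype.card_prod, ZMod.card]
  push_cast
  ring

lemma sum_sq_kHat_latRep2_le (kk : Lat N → ℝ) :
    ∑ w, kHat N kk (latRep2 N w) ^ 2 ≤ 4 * (N : ℝ) ^ 2 * ∑ z, kk z ^ 2 := by
  calc ∑ w, kHat N kk (latRep2 N w) ^ 2
      ≤ ∑ w, Complex.normSq (∑ z, (kk z : ℂ) * latChar N (w * z)) := by
        refine Finset.sum_le_sum fun w _ ↦ ?_
        rw [kHat_latRep2_eq_re, sq]
        exact Complex.re_sq_le_normSq _
    _ = 4 * (N : ℝ) ^ 2 * ∑ z, kk z ^ 2 := by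
        rw [sum_normSq_sum_mul_primitive latChar_isPrimitive, card_lat]
        simp only [Complex.normSq_ofReal, sq]

end Lattice

/-! ### Trigonometric sums -/

lemma one_sub_cos_sub_le (a b : ℝ) :
    1 - Real.cos (a - b) ≤ 2 * (1 - Real.cos a) + 2 * (1 - Real.cos b) := by
  rw [Real.cos_sub]
  nlinarith [Real.sin_sq_add_cos_sq a, Real.sin_sq_add_cos_sq b,
    sq_nonneg (Real.sin a + Real.sin b), sq_nonneg (Real.cos a + Real.cos b - 2)]

lemma sq_div_five_le_one_sub_cos {x : ℝ} (hx : |x| ≤ Real.pi) : x ^ 2 / 5 ≤ 1 - Real.cos x := by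
  have hcos := Real.cos_le_one_sub_mul_cos_sq hx
  have hpi : Real.pi ^ 2 ≤ 10 := by nlinarith [Real.pi_lt_d2, Real.pi_pos]
  have hcoef : (1 : ℝ) / 5 ≤ 2 / Real.pi ^ 2 := by
    rw [div_le_div_iff₀ (by norm_num) (by positivity)]
    linarith
  nlinarith [sq_nonneg x]

lemma mul_one_sub_cos_le_sum (θ φ : ℝ) {m M : ℕ} (hm : m ≤ M) :
    M / 4 * (1 - Real.cos (m * θ)) ≤
      ∑ i ∈ Finset.range (2 * M), (1 - Real.cos (θ * i + φ)) := by
  set g : ℕ → ℝ := fun i ↦ 1 - Real.cos (θ * i + φ)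
  have hg0 (i : ℕ) : 0 ≤ g i := sub_nonneg.2 (Real.cos_le_one _)
  have hpair (i : ℕ) : 1 - Real.cos (m * θ) ≤ 2 * g (m + i) + 2 * g i := by
    refine le_trans (le_of_eq ?_) (one_sub_cos_sub_le _ _)
    congr 2
    push_cast
    ring
  have hle : ∑ i ∈ Finset.range M, g i ≤ ∑ i ∈ Finset.range (2 * M), g i :=
    Finset.sum_le_sum_of_subset_of_nonneg (Finset.range_mono (by lia)) fun i _ _ ↦ hg0 i
  have hshift : ∑ i ∈ Finset.range M, g (m + i) ≤ ∑ i ∈ Finset.range (2 * M), g i := by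
    rw [Finset.range_eq_Ico, Finset.sum_Ico_add]
    refine Finset.sum_le_sum_of_subset_of_nonneg (fun i hi ↦ ?_) fun i _ _ ↦ hg0 i
    rw [Finset.mem_Ico] at hi
    rw [Finset.mem_range]
    lia
  have hsum := Finset.sum_le_sum fun i (_ : i ∈ Finset.range M) ↦ hpair i
  rw [Finset.sum_const, Finset.card_range, nsmul_eq_mul, Finset.sum_add_distrib, ← Finset.mul_sum,
    ← Finset.mul_sum] at hsum
  linarith

lemma exists_nat_le_sq_min_le_one_sub_cos {θ : ℝ} (hθ : |θ| ≤ Real.pi) (M : ℕ) :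
    ∃ m ≤ M, min 1 (M * |θ|) ^ 2 / 5 ≤ 1 - Real.cos (m * θ) := by
  suffices h : ∃ m ≤ M, m * |θ| ≤ Real.pi ∧ min 1 (M * |θ|) ≤ m * |θ| by
    obtain ⟨m, hmM, hmpi, hm⟩ := h
    rw [← Nat.abs_cast m, ← abs_mul] at hmpi hm
    refine ⟨m, hmM, le_trans ?_ (sq_div_five_le_one_sub_cos hmpi)⟩
    rw [← sq_abs (m * θ)]
    gcongr
  rcases le_total (M * |θ|) Real.pi with h | h
  · exact ⟨M, le_rfl, h, min_le_right _ _⟩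
  · have hθ0 : 0 < |θ| := (abs_nonneg θ).lt_of_ne fun h0 ↦ by
      rw [← h0, mul_zero] at h
      exact Real.pi_pos.not_ge h
    have hfloor : ⌊Real.pi / |θ|⌋₊ * |θ| ≤ Real.pi :=
      (le_div_iff₀ hθ0).1 (Nat.floor_le (by positivity))
    have hlt : Real.pi < (⌊Real.pi / |θ|⌋₊ + 1) * |θ| :=
      (div_lt_iff₀ hθ0).1 (Nat.lt_floor_add_one _)
    have hone : (1 : ℝ) ≤ ⌊Real.pi / |θ|⌋₊ :=
      mod_cast (Nat.one_le_floor_iff _).2 ((one_le_div hθ0).2 hθ)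
    refine ⟨⌊Real.pi / |θ|⌋₊, Nat.floor_le_of_le ((div_le_iff₀ hθ0).2 h), hfloor,
      (min_le_left _ _).trans ?_⟩
    nlinarith [Real.pi_gt_three]

lemma sq_min_le_sum_one_sub_cos {θ : ℝ} (hθ : |θ| ≤ Real.pi) (φ : ℝ) (M : ℕ) :
    M / 20 * min 1 (M * |θ|) ^ 2 ≤
      ∑ i ∈ Finset.range (2 * M), (1 - Real.cos (θ * i + φ)) := by
  obtain ⟨m, hm, hcos⟩ := exists_nat_le_sq_min_le_one_sub_cos hθ M
  calc M / 20 * min 1 (M * |θ|) ^ 2 = M / 4 * (min 1 (M * |θ|) ^ 2 / 5) := by ring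
    _ ≤ M / 4 * (1 - Real.cos (m * θ)) := by gcongr
    _ ≤ _ := mul_one_sub_cos_le_sum θ φ hm

lemma sq_min_le_sum_sum_one_sub_cos {θ : ℝ × ℝ} (hθ : ‖θ‖ ≤ Real.pi) (φ : ℝ) (M : ℕ) :
    (M : ℝ) ^ 2 / 10 * min 1 (M * ‖θ‖) ^ 2 ≤ ∑ i ∈ Finset.range (2 * M),
      ∑ j ∈ Finset.range (2 * M), (1 - Real.cos (θ.1 * i + θ.2 * j + φ)) := by
  wlog h : ‖θ.2‖ ≤ ‖θ.1‖ generalizing θ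
  · have hswap := this (θ := θ.swap) (by rwa [Prod.norm_def, max_comm]) (le_of_not_ge h)
    rw [Finset.sum_comm, Prod.norm_def, max_comm] at hswap
    rw [Prod.norm_def]
    simpa only [Prod.fst_swap, Prod.snd_swap, add_comm (θ.2 * _)] using hswap
  have hnorm : ‖θ‖ = |θ.1| := max_eq_left h
  rw [hnorm] at hθ ⊢
  rw [Finset.sum_comm]
  calc (M : ℝ) ^ 2 / 10 * min 1 (M * |θ.1|) ^ 2
      = ∑ j ∈ Finset.range (2 * M), M / 20 * min 1 (M * |θ.1|) ^ 2 := by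
        rw [Finset.sum_const, Finset.card_range, nsmul_eq_mul]
        push_cast
        ring
    _ ≤ _ := Finset.sum_le_sum fun j _ ↦ by
        simpa only [add_assoc] using sq_min_le_sum_one_sub_cos hθ (θ.2 * j + φ) M

/-! ### The Kac kernel -/

section KacKernel

lemma gam_pos (N : ℕ) [NeZero N] : 0 < gam N :=
  Real.sqrt_pos.2 (inv_pos.2 (Nat.cast_pos.2 (NeZero.pos N)))

lemma gam_sq (N : ℕ) : gam N ^ 2 = (N : ℝ)⁻¹ := Real.sq_sqrt (by positivity)

lemma natCast_mul_gam_sq (N : ℕ) [NeZero N] : N * gam N ^ 2 = 1 := by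
  rw [gam_sq, mul_inv_cancel₀ (Nat.cast_ne_zero.2 (NeZero.ne N))]

/-- The point `γ w ∈ ℝ²` at which the profile is evaluated to give the Kac kernel at the lattice
site represented by `w`. -/
def scaledPt (γ : ℝ) (w : ℤ × ℤ) : ℝ × ℝ := (γ * w.1, γ * w.2)

lemma norm_scaledPt {γ : ℝ} (hγ : 0 ≤ γ) (w : ℤ × ℤ) : ‖scaledPt γ w‖ = γ * ‖w‖ := by
  simp only [scaledPt, Prod.norm_def, norm_mul, Real.norm_of_nonneg hγ, Int.norm_eq_abs,
    Real.norm_eq_abs, mul_max_of_nonneg _ _ hγ]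

variable (𝔎 : KacProfile)

lemma KacProfile.exists_le_on_closedBall : ∃ (u : ℝ × ℝ) (δ r : ℝ), 0 < δ ∧ 0 < r ∧ r ≤ 1 ∧
    ∀ x ∈ Metric.closedBall u r, x ≠ 0 ∧ δ ≤ 𝔎.f x := by
  obtain ⟨x₀, hx₀⟩ := 𝔎.nontriv
  have hpos : 0 < 𝔎.f x₀ := (𝔎.mem x₀).1.lt_of_ne' hx₀
  have hopen : IsOpen {x | 𝔎.f x₀ / 2 < 𝔎.f x} :=
    isOpen_lt continuous_const 𝔎.smooth.continuous
  obtain ⟨u, hu⟩ := (dense_compl_singleton (0 : ℝ × ℝ)).inter_open_nonempty _ hopen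
    ⟨x₀, half_lt_self hpos⟩
  obtain ⟨r, hr, hball⟩ := Metric.nhds_basis_closedBall.mem_iff.1
    ((hopen.inter isOpen_compl_singleton).mem_nhds hu)
  refine ⟨u, 𝔎.f x₀ / 2, min r 1, half_pos hpos, by positivity, min_le_right _ _, fun x hx ↦ ?_⟩
  have hx' := hball (Metric.closedBall_subset_closedBall (min_le_left _ _) hx)
  exact ⟨hx'.2, hx'.1.le⟩

variable {𝔎}

lemma KacProfile.norm_le_three_of_ne_zero {x : ℝ × ℝ} (h : 𝔎.f x ≠ 0) : ‖x‖ ≤ 3 := by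
  have hnorm : Real.sqrt (x.1 ^ 2 + x.2 ^ 2) ≤ 3 := not_lt.1 fun hlt ↦ h (𝔎.supp x hlt)
  refine max_le ?_ ?_
  · exact (Real.abs_le_sqrt (by linarith [sq_nonneg x.2])).trans hnorm
  · exact (Real.abs_le_sqrt (by linarith [sq_nonneg x.1])).trans hnorm

variable {N : ℕ} {c γ : ℝ}

lemma kGamma_nonneg (hc : 0 ≤ c) (z : Lat N) : 0 ≤ kGamma 𝔎 N c γ z := by
  unfold kGamma
  split_ifs
  · exact le_rfl
  · exact mul_nonneg (by positivity) (𝔎.mem _).1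

lemma kGamma_le (hc : 0 ≤ c) (z : Lat N) : kGamma 𝔎 N c γ z ≤ c * γ ^ 2 := by
  unfold kGamma
  split_ifs
  · positivity
  · exact mul_le_of_le_one_right (by positivity) (𝔎.mem _).2

lemma kGamma_eq_zero_of_lt (hγ : 0 ≤ γ) {z : Lat N} (hz : 3 < γ * ‖latRep2 N z‖) :
    kGamma 𝔎 N c γ z = 0 := by
  have hf : 𝔎.f (scaledPt γ (latRep2 N z)) = 0 := by
    by_contra hne
    rw [← norm_scaledPt hγ] at hz
    exact hz.not_ge (KacProfile.norm_le_three_of_ne_zero hne)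
  unfold kGamma
  split_ifs
  · rfl
  · exact mul_eq_zero_of_right _ hf

variable [NeZero N]

lemma kGamma_neg (z : Lat N) : kGamma 𝔎 N c γ (-z) = kGamma 𝔎 N c γ z := by
  have hsq (v : ZMod (2 * N)) : (latRep N (-v) : ℝ) ^ 2 = (latRep N v : ℝ) ^ 2 :=
    mod_cast latRep_neg_sq v
  have hradial := 𝔎.radial (γ * latRep N (-z).1, γ * latRep N (-z).2)
    (γ * latRep N z.1, γ * latRep N z.2)
    (by simp only [enorm2, mul_pow, Prod.fst_neg, Prod.snd_neg, hsq])
  simp only [kGamma, neg_eq_zero, hradial]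

lemma one_div_le_of_sum_kGamma_eq_one (hγ : 0 < γ) (hγ1 : γ ≤ 1) (hc : 0 ≤ c)
    (hsum : ∑ z : Lat N, kGamma 𝔎 N c γ z = 1) : 1 / 49 ≤ c := by
  have hle : (1 : ℝ) ≤ (2 * (3 / γ) + 1) ^ 2 * (c * γ ^ 2) := by
    calc (1 : ℝ) = ∑ z : Lat N with ‖latRep2 N z‖ ≤ 3 / γ, kGamma 𝔎 N c γ z := by
          rw [← hsum, Finset.sum_filter_of_ne fun z _ hz ↦ ?_]
          rw [le_div_iff₀' hγ]
          exact not_lt.1 (mt (kGamma_eq_zero_of_lt hγ.le) hz)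
      _ ≤ (Finset.card {z : Lat N | ‖latRep2 N z‖ ≤ 3 / γ} : ℝ) * (c * γ ^ 2) := by
          rw [← nsmul_eq_mul]
          exact Finset.sum_le_card_nsmul _ _ _ fun z _ ↦ kGamma_le hc z
      _ ≤ _ := by
          gcongr
          exact card_norm_latRep2_le (by positivity)
  have hsq : (2 * (3 / γ) + 1) ^ 2 * (c * γ ^ 2) = (6 + γ) ^ 2 * c := by
    field_simp
    ring
  nlinarith

lemma mul_sum_le_sum_kGamma_mul {δ : ℝ} (hδ : 0 < δ) (hγ : 0 < γ) (hγN : 3 < γ * N) (hc : 0 ≤ c)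
    {S : Finset (ℤ × ℤ)} (hS : ∀ w ∈ S, scaledPt γ w ≠ 0 ∧ δ ≤ 𝔎.f (scaledPt γ w))
    {g : ℤ × ℤ → ℝ} (hg : ∀ w, 0 ≤ g w) :
    c * γ ^ 2 * δ * ∑ w ∈ S, g w ≤ ∑ z, kGamma 𝔎 N c γ z * g (latRep2 N z) := by
  set F : ℤ × ℤ → ℝ := fun w ↦ (if w = 0 then 0 else c * γ ^ 2 * 𝔎.f (scaledPt γ w)) * g w with hF
  have hF0 (w : ℤ × ℤ) : 0 ≤ F w := by
    refine mul_nonneg ?_ (hg w)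
    split_ifs
    · exact le_rfl
    · exact mul_nonneg (by positivity) (𝔎.mem _).1
  calc c * γ ^ 2 * δ * ∑ w ∈ S, g w ≤ ∑ w ∈ S, F w := by
        rw [Finset.mul_sum]
        refine Finset.sum_le_sum fun w hw ↦ ?_
        have hw0 : w ≠ 0 := fun h ↦ (hS w hw).1 (by simp [h, scaledPt])
        simp only [hF, if_neg hw0]
        have := (hS w hw).2
        have := hg w
        gcongr
    _ ≤ ∑ z, F (latRep2 N z) := by
        refine sum_le_sum_latRep2 (fun w hw ↦ ?_) hF0
        have hw3 := KacProfile.norm_le_three_of_ne_zero (hδ.trans_le (hS w hw).2).ne'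
        rw [norm_scaledPt hγ.le] at hw3
        exact lt_of_mul_lt_mul_left (hw3.trans_lt hγN) hγ.le
    _ = _ := by
        refine Finset.sum_congr rfl fun z _ ↦ ?_
        simp only [hF, latRep2_eq_zero]
        rfl

lemma abs_mul_ceil_add_sub_le {γ : ℝ} (hγ : 0 < γ) (v : ℝ) {r : ℝ} {i : ℕ}
    (hi : (i + 1) * γ ≤ 2 * r) : |γ * (⌈(v - r) / γ⌉ + i : ℤ) - v| ≤ r := by
  have hle := (div_le_iff₀ hγ).1 (Int.le_ceil ((v - r) / γ))
  have hlt : ((⌈(v - r) / γ⌉ : ℝ) - 1) * γ < v - r :=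
    (lt_div_iff₀ hγ).1 (by linarith [Int.ceil_lt_add_one ((v - r) / γ)])
  have : 0 ≤ i * γ := by positivity
  push_cast
  rw [abs_le]
  constructor <;> linarith

variable (𝔎) in
lemma exists_box_sum_le_sum_kGamma_mul : ∃ δ r : ℝ, 0 < δ ∧ 0 < r ∧ r ≤ 1 ∧
    ∀ (N : ℕ) [NeZero N] {γ : ℝ}, 0 < γ → γ ≤ r → 3 < γ * N → ∃ (a b : ℤ) (M : ℕ),
      r / 2 ≤ M * γ ∧ ∀ {c : ℝ}, 0 ≤ c → ∀ {g : ℤ × ℤ → ℝ}, (∀ w, 0 ≤ g w) →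
        c * γ ^ 2 * δ * ∑ i ∈ Finset.range (2 * M), ∑ j ∈ Finset.range (2 * M), g (a + i, b + j) ≤
          ∑ z, kGamma 𝔎 N c γ z * g (latRep2 N z) := by
  obtain ⟨u, δ, r, hδ, hr, hr1, hball⟩ := 𝔎.exists_le_on_closedBall
  refine ⟨δ, r, hδ, hr, hr1, fun N _ γ hγ hγr hγN ↦
    ⟨⌈(u.1 - r) / γ⌉, ⌈(u.2 - r) / γ⌉, ⌊r / γ⌋₊, ?_, fun hc g hg ↦ ?_⟩⟩
  · have hlt := (div_lt_iff₀ hγ).1 (Nat.lt_floor_add_one (r / γ))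
    have hone : (1 : ℝ) ≤ ⌊r / γ⌋₊ := mod_cast (Nat.one_le_floor_iff _).2 ((one_le_div hγ).2 hγr)
    nlinarith
  set M := ⌊r / γ⌋₊
  have hM : M * γ ≤ r := (le_div_iff₀ hγ).1 (Nat.floor_le (by positivity))
  have hlast (i : ℕ) (hi : i < 2 * M) : (i + 1) * γ ≤ 2 * r := by
    have : (i + 1 : ℝ) * γ ≤ 2 * M * γ := by
      gcongr
      exact_mod_cast hi
    linarith
  set emb : ℕ × ℕ → ℤ × ℤ := fun p ↦ (⌈(u.1 - r) / γ⌉ + p.1, ⌈(u.2 - r) / γ⌉ + p.2) with hemb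
  have hinj : Function.Injective emb := fun p q h ↦ by
    simp only [hemb, Prod.mk.injEq] at h
    ext <;> lia
  rw [← Finset.sum_product', ← Finset.sum_image (f := g) (g := emb) hinj.injOn]
  refine mul_sum_le_sum_kGamma_mul hδ hγ hγN hc (fun w hw ↦ hball _ ?_) hg
  obtain ⟨p, hp, rfl⟩ := Finset.mem_image.1 hw
  rw [Finset.mem_product, Finset.mem_range, Finset.mem_range] at hp
  rw [Metric.mem_closedBall, Prod.dist_eq]
  exact max_le (abs_mul_ceil_add_sub_le hγ _ (hlast _ hp.1))
    (abs_mul_ceil_add_sub_le hγ _ (hlast _ hp.2))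

lemma one_sub_kHat_eq_sum {kk : Lat N → ℝ} (hsum : ∑ z, kk z = 1) (ω : ℤ × ℤ) :
    1 - kHat N kk ω = ∑ z, kk z * (1 - Real.cos (Real.pi / N * ω.1 * (latRep2 N z).1 +
      Real.pi / N * ω.2 * (latRep2 N z).2)) := by
  simp only [mul_sub, mul_one, Finset.sum_sub_distrib, hsum, kHat, latRep2]
  refine congr_arg _ (Finset.sum_congr rfl fun z _ ↦ ?_)
  ring_nf

lemma sq_mul_min_le_sum_sum_one_sub_cos {r : ℝ} (hr : 0 ≤ r) (hr1 : r ≤ 1) {M : ℕ}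
    (hM : r / 2 ≤ M * gam N) {ω : ℤ × ℤ} (hω : ‖ω‖ ≤ N) (a b : ℤ) :
    (M : ℝ) ^ 2 / 10 * (r * min 1 (gam N * ‖ω‖)) ^ 2 ≤
      ∑ i ∈ Finset.range (2 * M), ∑ j ∈ Finset.range (2 * M), (1 - Real.cos
        (Real.pi / N * ω.1 * (a + i : ℤ) + Real.pi / N * ω.2 * (b + j : ℤ))) := by
  have hN : (0 : ℝ) < N := Nat.cast_pos.2 (NeZero.pos N)
  have hγ := gam_pos N
  have hθ : ‖scaledPt (Real.pi / N) ω‖ = Real.pi / N * ‖ω‖ := norm_scaledPt (by positivity) ω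
  have hθpi : ‖scaledPt (Real.pi / N) ω‖ ≤ Real.pi := by
    rw [hθ, div_mul_eq_mul_div, div_le_iff₀ hN]
    gcongr
  have hmin : r * min 1 (gam N * ‖ω‖) ≤ min 1 (M * ‖scaledPt (Real.pi / N) ω‖) := by
    rw [mul_min_of_nonneg _ _ hr, mul_one]
    refine min_le_min hr1 ?_
    calc r * (gam N * ‖ω‖) ≤ Real.pi * (M * gam N) * (gam N * ‖ω‖) := by
          gcongr
          nlinarith [Real.pi_gt_three]
      _ = M * (Real.pi * gam N ^ 2 * ‖ω‖) := by ring
      _ = M * ‖scaledPt (Real.pi / N) ω‖ := by rw [hθ, gam_sq, ← div_eq_mul_inv]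
  calc (M : ℝ) ^ 2 / 10 * (r * min 1 (gam N * ‖ω‖)) ^ 2
      ≤ (M : ℝ) ^ 2 / 10 * min 1 (M * ‖scaledPt (Real.pi / N) ω‖) ^ 2 := by gcongr
    _ ≤ _ := sq_min_le_sum_sum_one_sub_cos hθpi
        (Real.pi / N * ω.1 * a + Real.pi / N * ω.2 * b) M
    _ = _ := by
        refine Finset.sum_congr rfl fun i _ ↦ Finset.sum_congr rfl fun j _ ↦ ?_
        simp only [scaledPt]
        push_cast
        ring_nf

variable (𝔎) in
lemma exists_le_and_spectralGap_kGamma : ∃ K q γ₁ : ℝ, 0 < K ∧ 0 < q ∧ 0 < γ₁ ∧ γ₁ ≤ 1 ∧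
    ∀ (N : ℕ) [NeZero N], gam N ≤ γ₁ → ∀ {c : ℝ}, 0 < c →
      ∑ z : Lat N, kGamma 𝔎 N c (gam N) z = 1 → c ≤ K ∧ ∀ ω : ℤ × ℤ, ‖ω‖ ≤ N →
        q * min 1 (gam N * ‖ω‖) ^ 2 ≤ 1 - kHat N (kGamma 𝔎 N c (gam N)) ω := by
  obtain ⟨δ, r, hδ, hr, hr1, hbox⟩ := exists_box_sum_le_sum_kGamma_mul 𝔎
  refine ⟨(δ * r ^ 2)⁻¹, δ * r ^ 4 / 1960, min (1 / 4) r, by positivity, by positivity,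
    by positivity, (min_le_right _ _).trans hr1, fun N _ hγN c hc hsum ↦ ?_⟩
  have hγ := gam_pos N
  have hγ4 := hγN.trans (min_le_left _ _)
  obtain ⟨a, b, M, hM, hle⟩ := hbox N hγ (hγN.trans (min_le_right _ _))
    (by nlinarith [natCast_mul_gam_sq N])
  have hMsq : r ^ 2 / 4 ≤ (M * gam N) ^ 2 := by nlinarith
  refine ⟨?_, fun ω hω ↦ ?_⟩
  · have hone := hle hc.le (g := fun _ ↦ 1) fun _ ↦ zero_le_one
    simp only [mul_one, Finset.sum_const, Finset.card_range, nsmul_eq_mul, hsum] at hone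
    push_cast at hone
    rw [← one_div, le_div_iff₀ (by positivity)]
    nlinarith [mul_le_mul_of_nonneg_left hMsq (mul_pos hc hδ).le]
  · have hc49 := one_div_le_of_sum_kGamma_eq_one hγ (by linarith) hc.le hsum
    set m := min 1 (gam N * ‖ω‖)
    refine le_trans ?_ ((hle hc.le (g := fun w ↦ 1 - Real.cos (Real.pi / N * ω.1 * w.1 +
      Real.pi / N * ω.2 * w.2)) fun w ↦ sub_nonneg.2 (Real.cos_le_one _)).trans_eq
      (one_sub_kHat_eq_sum hsum ω).symm)
    calc δ * r ^ 4 / 1960 * m ^ 2 = 1 / 49 * (r ^ 2 / 4) * (δ / 10 * (r * m) ^ 2) := by ring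
      _ ≤ c * (M * gam N) ^ 2 * (δ / 10 * (r * m) ^ 2) := by gcongr
      _ = c * gam N ^ 2 * δ * ((M : ℝ) ^ 2 / 10 * (r * m) ^ 2) := by ring
      _ ≤ c * gam N ^ 2 * δ * _ := by
          gcongr
          exact sq_mul_min_le_sum_sum_one_sub_cos hr.le hr1 hM hω a b

end KacKernel

/-! ### The renormalisation constant -/

section Renormalisation

variable {N : ℕ} [NeZero N] {kk : Lat N → ℝ} {γ q K : ℝ}

lemma abs_kHat_le_one (hkk : ∀ z, 0 ≤ kk z) (hsum : ∑ z, kk z = 1) (ω : ℤ × ℤ) :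
    |kHat N kk ω| ≤ 1 := by
  rw [← hsum]
  refine (Finset.abs_sum_le_sum_abs _ _).trans (Finset.sum_le_sum fun z _ ↦ ?_)
  rw [abs_mul, abs_of_nonneg (hkk z)]
  exact mul_le_of_le_one_right (hkk z) (Real.abs_cos_le_one _)

lemma cGamma_nonneg (hkk : ∀ z, 0 ≤ kk z) (hsum : ∑ z, kk z = 1) : 0 ≤ cGamma N kk γ := by
  refine mul_nonneg (by norm_num) (Finset.sum_nonneg fun z _ ↦ ?_)
  split_ifs
  · exact le_rfl
  · have hle := (le_abs_self _).trans (abs_kHat_le_one hkk hsum (latRep2 N z))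
    exact div_nonneg (sq_nonneg _) (mul_nonneg (by positivity) (sub_nonneg.2 hle))

lemma one_le_norm_latRep2 {z : Lat N} (hz : z ≠ 0) : 1 ≤ ‖latRep2 N z‖ := by
  by_contra! hlt
  rw [Prod.norm_def, max_lt_iff, Int.norm_eq_abs, Int.norm_eq_abs] at hlt
  refine hz (latRep2_eq_zero.1 (Prod.ext ?_ ?_))
  · exact Int.abs_lt_one_iff.1 (by exact_mod_cast hlt.1)
  · exact Int.abs_lt_one_iff.1 (by exact_mod_cast hlt.2)

lemma norm_latRep2_le (z : Lat N) : ‖latRep2 N z‖ ≤ N := by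
  refine max_le ?_ ?_ <;> rw [Int.norm_eq_abs] <;> exact_mod_cast abs_latRep_le _

-- Frequencies with `1 - K̂ ≥ γ` are controlled by Parseval; the spectral gap confines the other
-- ones to a ball of radius `(q γ)^(-1/2)`, where each summand is at most `1 / q`.
lemma sq_kHat_div_le (hkk : ∀ z, 0 ≤ kk z) (hsum : ∑ z, kk z = 1) (hγ : 0 < γ) (hγ1 : γ ≤ 1)
    (hγq : γ ≤ q) {z : Lat N} (hz : z ≠ 0)
    (hgap : q * min 1 (γ * ‖latRep2 N z‖) ^ 2 ≤ 1 - kHat N kk (latRep2 N z)) :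
    kHat N kk (latRep2 N z) ^ 2 / ((γ ^ 2)⁻¹ * (1 - kHat N kk (latRep2 N z))) ≤
      γ * kHat N kk (latRep2 N z) ^ 2 + if ‖latRep2 N z‖ ≤ √(q * γ)⁻¹ then q⁻¹ else 0 := by
  have hq := hγ.trans_le hγq
  set h := kHat N kk (latRep2 N z)
  set x := ‖latRep2 N z‖
  have hx1 : 1 ≤ x := one_le_norm_latRep2 hz
  have hγmin : γ ≤ min 1 (γ * x) := le_min hγ1 (le_mul_of_one_le_right hγ.le hx1)
  have hpos : 0 < 1 - h := (mul_pos hq (pow_pos (hγ.trans_le hγmin) 2)).trans_le hgap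
  have hsq : h ^ 2 ≤ 1 := (sq_le_one_iff_abs_le_one _).2 (abs_kHat_le_one hkk hsum _)
  have hdiv : h ^ 2 / ((γ ^ 2)⁻¹ * (1 - h)) = γ ^ 2 / (1 - h) * h ^ 2 := by field_simp
  rw [hdiv]
  split_ifs with hx
  · have hbound : γ ^ 2 / (1 - h) ≤ q⁻¹ := by
      rw [div_le_iff₀ hpos, inv_mul_eq_div, le_div_iff₀' hq]
      exact le_trans (by gcongr) hgap
    calc γ ^ 2 / (1 - h) * h ^ 2 ≤ q⁻¹ * 1 := by gcongr
      _ ≤ γ * h ^ 2 + q⁻¹ := by linarith [mul_nonneg hγ.le (sq_nonneg h)]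
  · rw [add_zero]
    have hbound : γ ≤ 1 - h := by
      refine le_trans ?_ hgap
      have hx' : 1 < q * γ * x ^ 2 := by
        rw [not_le, Real.sqrt_lt' (by linarith), inv_lt_iff_one_lt_mul₀' (by positivity)] at hx
        exact hx
      rcases min_cases 1 (γ * x) with ⟨h1, -⟩ | ⟨h1, -⟩ <;> rw [h1]
      · linarith
      · nlinarith
    gcongr
    rw [div_le_iff₀ hpos]
    nlinarith

lemma sum_sq_le_of_forall_le {ι : Type*} [Fintype ι] {f : ι → ℝ} {B : ℝ} (hf : ∀ i, 0 ≤ f i)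
    (hsum : ∑ i, f i = 1) (hB : ∀ i, f i ≤ B) : ∑ i, f i ^ 2 ≤ B := by
  calc ∑ i, f i ^ 2 ≤ ∑ i, B * f i :=
        Finset.sum_le_sum fun i _ ↦ by nlinarith [hf i, hB i]
    _ = B := by rw [← Finset.mul_sum, hsum, mul_one]

lemma cGamma_mul_gam_le (hkk : ∀ z, 0 ≤ kk z) (hsum : ∑ z, kk z = 1)
    (hK : ∀ z, kk z ≤ K * gam N ^ 2) (hγ1 : gam N ≤ 1) (hγq : gam N ≤ q)
    (hgap : ∀ z, q * min 1 (gam N * ‖latRep2 N z‖) ^ 2 ≤ 1 - kHat N kk (latRep2 N z)) :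
    cGamma N kk (gam N) * gam N ≤ K + 2 * q⁻¹ ^ 2 + 1 := by
  have hγ := gam_pos N
  have hNγ := natCast_mul_gam_sq N
  set γ := gam N
  have hq : 0 < q := hγ.trans_le hγq
  set R := √(q * γ)⁻¹
  have hR : R ^ 2 = (q * γ)⁻¹ := Real.sq_sqrt (by positivity)
  have hparseval : ∑ z, kHat N kk (latRep2 N z) ^ 2 ≤ 4 * (N : ℝ) ^ 2 * (K * γ ^ 2) :=
    (sum_sq_kHat_latRep2_le kk).trans (by gcongr; exact sum_sq_le_of_forall_le hkk hsum hK)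
  have hcount : ∑ z : Lat N, (if ‖latRep2 N z‖ ≤ R then q⁻¹ else 0) ≤ (8 * R ^ 2 + 2) * q⁻¹ := by
    rw [← Finset.sum_filter, Finset.sum_const, nsmul_eq_mul]
    gcongr
    exact (card_norm_latRep2_le (Real.sqrt_nonneg _)).trans (by nlinarith [sq_nonneg (2 * R - 1)])
  have hcGamma : cGamma N kk γ ≤ 1 / 4 *
      (γ * (4 * (N : ℝ) ^ 2 * (K * γ ^ 2)) + (8 * R ^ 2 + 2) * q⁻¹) := by
    refine mul_le_mul_of_nonneg_left ?_ (by norm_num)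
    refine (Finset.sum_le_sum fun z _ ↦ ?_).trans (Finset.sum_add_distrib.trans_le
      (add_le_add ((Finset.mul_sum ..).symm.trans_le (by gcongr)) hcount))
    by_cases hz : z = 0
    · rw [if_pos hz]
      positivity
    · rw [if_neg hz]
      exact sq_kHat_div_le hkk hsum hγ hγ1 hγq hz (hgap z)
  have hγq' : q⁻¹ * γ ≤ 1 := by rwa [inv_mul_le_one₀ hq]
  calc cGamma N kk γ * γ
      ≤ 1 / 4 * (γ * (4 * (N : ℝ) ^ 2 * (K * γ ^ 2)) + (8 * R ^ 2 + 2) * q⁻¹) * γ := by gcongr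
    _ = K * (N * γ ^ 2) ^ 2 + 2 * (R ^ 2 * γ) * q⁻¹ + 1 / 2 * (q⁻¹ * γ) := by ring
    _ = K + 2 * q⁻¹ ^ 2 + 1 / 2 * (q⁻¹ * γ) := by
        rw [hNγ, hR]
        field_simp
    _ ≤ K + 2 * q⁻¹ ^ 2 + 1 := by linarith

end Renormalisation

/-! ### The fluctuation field -/

section Fluctuations

variable {N : ℕ} [NeZero N]

lemma abs_betaCrit_le {𝔎 : KacProfile} {c B : ℝ} (A : ℝ) (hγ1 : gam N ≤ 1)
    (hC : 0 ≤ cGamma N (kGamma 𝔎 N c (gam N)) (gam N))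
    (hB : cGamma N (kGamma 𝔎 N c (gam N)) (gam N) * gam N ≤ B) :
    |betaCrit 𝔎 N c A| ≤ 1 + (B + |A|) * gam N := by
  have hγ := gam_pos N
  have hsq : gam N ^ 2 ≤ gam N := pow_le_of_le_one hγ.le hγ1 two_ne_zero
  rw [betaCrit, mul_add, add_mul]
  set 𝔠 := cGamma N (kGamma 𝔎 N c (gam N)) (gam N)
  calc |1 + (gam N ^ 2 * 𝔠 + gam N ^ 2 * A)|
      ≤ |1| + (|gam N ^ 2 * 𝔠| + |gam N ^ 2 * A|) :=
        (abs_add_le _ _).trans (add_le_add_right (abs_add_le _ _) _)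
    _ = 1 + (𝔠 * gam N * gam N + |A| * gam N ^ 2) := by
        rw [abs_one, abs_mul, abs_mul, abs_sq, abs_of_nonneg hC]
        ring
    _ ≤ 1 + (B * gam N + |A| * gam N) := by gcongr

lemma exists_kGamma_le_and_abs_betaCrit_le (𝔎 : KacProfile) (A : ℝ) :
    ∃ K γ₀ : ℝ, 0 < K ∧ 0 < γ₀ ∧ γ₀ ≤ 1 ∧ ∀ (N : ℕ) [NeZero N], gam N ≤ γ₀ → ∀ {c : ℝ}, 0 < c →
      ∑ z, kGamma 𝔎 N c (gam N) z = 1 →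
      (∀ z, kGamma 𝔎 N c (gam N) z ≤ K * gam N ^ 2) ∧
        |betaCrit 𝔎 N c A| ≤ 1 + K * gam N ∧ K * gam N ≤ 1 := by
  obtain ⟨K₁, q, γ₁, hK₁, hq, hγ₁, hγ₁1, hkernel⟩ := exists_le_and_spectralGap_kGamma 𝔎
  set K := K₁ + 2 * q⁻¹ ^ 2 + 1 + |A|
  have hK0 : 0 < K := by positivity
  have hKK₁ : K₁ ≤ K := by
    have : 0 ≤ 2 * q⁻¹ ^ 2 + 1 + |A| := by positivity
    linarith
  refine ⟨K, min (min γ₁ q) K⁻¹, hK0, by positivity,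
    (min_le_left _ _).trans ((min_le_left _ _).trans hγ₁1), fun N _ hγ c hc hsum ↦ ?_⟩
  obtain ⟨⟨hγγ₁, hγq⟩, hγK⟩ : (gam N ≤ γ₁ ∧ gam N ≤ q) ∧ gam N ≤ K⁻¹ := by
    simpa only [le_min_iff] using hγ
  obtain ⟨hcK, hgap⟩ := hkernel N hγγ₁ hc hsum
  have hle {K' : ℝ} (hK' : K₁ ≤ K') (z : Lat N) :
      kGamma 𝔎 N c (gam N) z ≤ K' * gam N ^ 2 := by
    refine (kGamma_le hc.le z).trans ?_
    gcongr
    exact hcK.trans hK'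
  have hnonneg := kGamma_nonneg (𝔎 := 𝔎) (N := N) (γ := gam N) hc.le
  have hγ1 := hγγ₁.trans hγ₁1
  refine ⟨hle hKK₁, ?_, (le_inv_mul_iff₀ hK0).1 (by rwa [mul_one])⟩
  exact abs_betaCrit_le A hγ1 (cGamma_nonneg hnonneg hsum) <|
    cGamma_mul_gam_le hnonneg hsum (hle le_rfl) hγ1 hγq fun z ↦ hgap _ (norm_latRep2_le z)

lemma circulant_mem_rowStochastic {G : Type*} [AddCommGroup G] [Fintype G] [DecidableEq G]
    {k : G → ℝ} (hk : ∀ z, 0 ≤ k z) (hsum : ∑ z, k z = 1) :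
    Matrix.circulant k ∈ Matrix.rowStochastic ℝ G := by
  refine Matrix.mem_rowStochastic_iff_sum.2 ⟨fun x y ↦ hk (x - y), fun x ↦ ?_⟩
  exact (Equiv.sum_comp (Equiv.subLeft x) k).trans hsum

lemma gibbsE_eq_gibbsMean (kk : Lat N → ℝ) (β : ℝ) (F : (Lat N → ℝ) → ℝ) :
    gibbsE N kk β 0 F = gibbsMean (Matrix.circulant kk) β (fun s ↦ F fun x ↦ spin (s x)) := by
  have hweight (s : Lat N → Bool) :
      Real.exp (hamil N kk β 0 fun x ↦ spin (s x)) = gibbsWeight (Matrix.circulant kk) β s := by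
    simp only [hamil, gibbsWeight, localField, Matrix.circulant_apply, zero_mul,
      Finset.sum_const_zero, add_zero, Finset.mul_sum, mul_assoc, mul_left_comm]
  simp only [gibbsE, hweight, gibbsMean_apply, div_eq_inv_mul]

lemma gibbsE_sum_abs_fluct_pow (kk : Lat N → ℝ) (β γ : ℝ) {p : ℕ} (hp : Even p) :
    gibbsE N kk β 0 (fun σ ↦ ∑ z, ((N : ℝ) ^ 2)⁻¹ * |fluct N kk γ σ z| ^ p) =
      4 * γ⁻¹ ^ p * fieldMean (Matrix.circulant kk) β (fun t ↦ t ^ p) := by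
  have hfluct (s : Lat N → Bool) (z : Lat N) : fluct N kk γ (fun x ↦ spin (s x)) z =
      γ⁻¹ * localField (Matrix.circulant kk) s z := rfl
  have hsum : (fun s ↦ ∑ z, ((N : ℝ) ^ 2)⁻¹ * |fluct N kk γ (fun x ↦ spin (s x)) z| ^ p) =
      (((N : ℝ) ^ 2)⁻¹ * γ⁻¹ ^ p) •
        ∑ z, fun s ↦ localField (Matrix.circulant kk) s z ^ p := by
    ext s
    simp only [hfluct, hp.pow_abs, mul_pow, Pi.smul_apply, Finset.sum_apply, smul_eq_mul,
      Finset.mul_sum, mul_assoc]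
  rw [gibbsE_eq_gibbsMean, hsum, map_smul, map_sum, fieldMean_apply, card_lat, smul_eq_mul,
    mul_inv]
  ring

end Fluctuations

/-- a priori bound `E[‖X_γ‖_{L^p(Λ_ε)}^p] ≤ C γ^{-p/2}` for even `p ≥ 2`. -/
theorem statement4 (𝔎 : KacProfile) (A : ℝ) (p : ℕ) (hp : Even p) (hp2 : 2 ≤ p) :
    ∃ γ₀ : ℝ, 0 < γ₀ ∧ ∃ C : ℝ, 0 < C ∧ ∀ (N : ℕ) [NeZero N], gam N ≤ γ₀ →
      ∀ c : ℝ, 0 < c → (∑ z : Lat N, kGamma 𝔎 N c (gam N) z) = 1 →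
      gibbsE N (kGamma 𝔎 N c (gam N)) (betaCrit 𝔎 N c A) 0
        (fun σ => ∑ z : Lat N, ((N : ℝ)^2)⁻¹ *
          |fluct N (kGamma 𝔎 N c (gam N)) (gam N) σ z| ^ p)
      ≤ C * (gam N) ^ (-(p : ℝ)/2) := by
  obtain ⟨K, γ₀, hK, hγ₀, hγ₀1, hkernel⟩ := exists_kGamma_le_and_abs_betaCrit_le 𝔎 A
  obtain ⟨k, rfl⟩ := hp.two_dvd
  obtain ⟨C, hC, hmoment⟩ := exists_fieldMean_pow_le hK.le k
  refine ⟨γ₀, hγ₀, 4 * C, by positivity, fun N _ hγ c hc hsum ↦ ?_⟩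
  obtain ⟨hle, hβ, hKγ⟩ := hkernel N hγ hc hsum
  have hγ_pos := gam_pos N
  have hJ := circulant_mem_rowStochastic (kGamma_nonneg hc.le) hsum
  have hsymm := Matrix.circulant_isSymm_iff.2 (kGamma_neg (𝔎 := 𝔎) (N := N) (c := c) (γ := gam N))
  have hbound := hmoment hJ hsymm (fun x ↦ by simp [kGamma]) hγ_pos (hγ.trans hγ₀1)
    (fun x y ↦ hle (x - y)) hβ hKγ
  have hpow : gam N ^ (-((2 * k : ℕ) : ℝ) / 2) = (gam N)⁻¹ ^ (2 * k) * gam N ^ k := by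
    rw [Nat.cast_mul, Nat.cast_two, neg_div, mul_div_cancel_left₀ _ two_ne_zero,
      Real.rpow_neg hγ_pos.le, Real.rpow_natCast, inv_pow, two_mul, pow_add, mul_inv,
      inv_mul_cancel_right₀ (pow_pos hγ_pos k).ne']
  rw [gibbsE_sum_abs_fluct_pow _ _ _ hp, hpow, mul_mul_mul_comm]
  gcongr

end IsingKac
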